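/- Let n ≥ 1 be an integer, r ∈ (0, π/2), η ∈ (0, π), and suppose φ ∈ (−π, 0) satisfies the critical point equation φ + η = cos r·sin φ·arccos(cos φ·cos r)/√(1 − cos²r·cos²φ). Set u = cos r·cos φ. Then lim_{t→0⁺} p_t(r,η) · (4πt)^{2n+3/2} · (sin η·sin r/(−sin φ)) · (1−u²)^n · √(1 − u·arccos(u)/√(1−u²)) · (arccos u)^{−(2n+1)} · e^{(φ+η)²·tan²r/(4t·sin²φ)} = 1; that is, p_t(r,η) ∼ −(1/(4πt)^{2n+3/2})·(sin φ/(sin η·sin r))·((arccos u)^{2n+1}/√(1 − u·arccos(u)/√(1−u²)))·e^{−(φ+η)²·tan²r/(4t·sin²φ)}/(1−u²)^n as t → 0⁺. -/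

import Mathlib

open Real MeasureTheory Filter Topology Set

noncomputable section

/-- The defining formula of the Jacobi polynomial `P_k^{(α,β)}` on `(-1,1)`. -/
def jacobiFormula (k α β : ℕ) (x : ℝ) : ℝ :=
  ((-1 : ℝ) ^ k / (2 ^ k * Nat.factorial k)) * (1 - x) ^ (-(α : ℤ)) * (1 + x) ^ (-(β : ℤ)) *
    iteratedDeriv k (fun y => (1 - y) ^ (α + k) * (1 + y) ^ (β + k)) x

/-- `J k α β` is the Jacobi polynomial `P_k^{(α,β)}`: a polynomial function satisfying the
defining formula on `(-1,1)`. -/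
def IsJacobi (J : ℕ → ℕ → ℕ → ℝ → ℝ) : Prop :=
  ∀ k α β : ℕ, (∃ p : Polynomial ℝ, ∀ x : ℝ, J k α β x = p.eval x) ∧
    ∀ x ∈ Set.Ioo (-1 : ℝ) 1, J k α β x = jacobiFormula k α β x

/-- The vertical factor `sin((m+1)η)/sin η`, extended by its limit `m+1` at `η = 0`. -/
def vertFactor (m : ℕ) (η : ℝ) : ℝ :=
  if η = 0 then (m + 1 : ℝ) else Real.sin ((m + 1) * η) / Real.sin η

/-- The general term of the double series defining the subelliptic heat kernel of the
quaternionic Hopf fibration on `S^{4n+3}`. -/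
def pTerm (n : ℕ) (J : ℕ → ℕ → ℕ → ℝ → ℝ) (t r η : ℝ) (mk : ℕ × ℕ) : ℝ :=
  (Real.Gamma (2 * n) / (2 * Real.pi ^ (2 * n + 2))) *
    (2 * (mk.2 : ℝ) + mk.1 + 2 * n + 1) * ((mk.1 : ℝ) + 1) *
    (Nat.choose (mk.2 + mk.1 + 2 * n) (2 * n - 1) : ℝ) *
    Real.exp (-(4 * ((mk.2 : ℝ) * (mk.2 + 2 * n + mk.1 + 1) + n * mk.1)) * t) *
    vertFactor mk.1 η * Real.cos r ^ mk.1 * J mk.2 (2 * n - 1) (mk.1 + 1) (Real.cos (2 * r))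

/-- The subelliptic heat kernel of the quaternionic Hopf fibration on `S^{4n+3}`. -/
def pKernel (n : ℕ) (J : ℕ → ℕ → ℕ → ℝ → ℝ) (t r η : ℝ) : ℝ :=
  ∑' mk : ℕ × ℕ, pTerm n J t r η mk

/-- The defining formula of the Gegenbauer polynomial `C_m^{2n+1}` on `(-1,1)`. -/
def gegenbauerFormula (n m : ℕ) (x : ℝ) : ℝ :=
  ((-1 : ℝ) ^ m / 2 ^ m) *
    (Real.Gamma ((m : ℝ) + 4 * n + 2) * Real.Gamma (2 * (n : ℝ) + 3 / 2) /
      (Real.Gamma (4 * (n : ℝ) + 2) * Real.Gamma ((m : ℝ) + 1) *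
        Real.Gamma (2 * (n : ℝ) + m + 3 / 2))) *
    (1 - x ^ 2) ^ (-(2 * (n : ℝ) + 1 / 2)) *
    iteratedDeriv m (fun y => (1 - y ^ 2) ^ (2 * (n : ℝ) + m + 1 / 2)) x

/-- `C m` is the Gegenbauer polynomial `C_m^{2n+1}`. -/
def IsGegenbauer (n : ℕ) (C : ℕ → ℝ → ℝ) : Prop :=
  ∀ m : ℕ, (∃ p : Polynomial ℝ, ∀ x : ℝ, C m x = p.eval x) ∧
    ∀ x ∈ Set.Ioo (-1 : ℝ) 1, C m x = gegenbauerFormula n m x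

/-- The Riemannian heat kernel of `S^{4n+3}`. -/
def qKernel (n : ℕ) (C : ℕ → ℝ → ℝ) (t x : ℝ) : ℝ :=
  (Real.Gamma (2 * n + 1) / (2 * Real.pi ^ (2 * n + 2))) *
    ∑' m : ℕ, ((m : ℝ) + 2 * n + 1) * Real.exp (-((m : ℝ) * (m + 4 * n + 2)) * t) * C m x

/-- The general term of the double series defining the subelliptic heat kernel on `CP^{2n+1}`. -/
def hTerm (n : ℕ) (J : ℕ → ℕ → ℕ → ℝ → ℝ) (t r φ : ℝ) (mk : ℕ × ℕ) : ℝ :=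
  (Real.Gamma (2 * n) / (4 * Real.pi ^ (2 * n + 2))) *
    (2 * (mk.2 : ℝ) + 2 * mk.1 + 2 * n + 1) * (2 * (mk.1 : ℝ) + 1) *
    (Nat.choose (mk.2 + 2 * mk.1 + 2 * n) (2 * n - 1) : ℝ) *
    Real.exp (-(4 * (mk.2 : ℝ) * (mk.2 + 2 * n + 2 * mk.1 + 1) + 8 * n * mk.1) * t) *
    Real.cos r ^ (2 * mk.1) * J mk.1 0 0 (Real.cos (2 * φ)) *
    J mk.2 (2 * n - 1) (2 * mk.1 + 1) (Real.cos (2 * r))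

/-- The subelliptic heat kernel of the fibration `CP^1 → CP^{2n+1} → HP^n`. -/
def hKernel (n : ℕ) (J : ℕ → ℕ → ℕ → ℝ → ℝ) (t r φ : ℝ) : ℝ :=
  ∑' mk : ℕ × ℕ, hTerm n J t r φ mk

end

def jq (k α β s : ℕ) : ℝ := (-1 : ℝ) ^ (k + s) * (Nat.choose (k + β) (β + s) : ℝ) * (Nat.choose (k + α + β + s) s : ℝ)

noncomputable def jQ (k α β : ℕ) (z : ℝ) : ℝ := ∑ s ∈ Finset.range (k + 1), jq k α β s * z ^ s

lemma jq_rec_zero (k α β : ℕ) :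
    ((k : ℝ) + 1) * jq (k + 1) α β 0 = - ((β : ℝ) + k + 1) * jq k (α + 1) β 0 := by
  unfold jq
  simp only [add_zero, Nat.choose_zero_right]
  have h := Nat.add_one_mul_choose_eq (k + β) k
  have e1 : (k + β).choose β = (k + β).choose k := by
    rw [Nat.choose_symm_add]
  have e2 : (k + 1 + β).choose β = (k + β).succ.choose k.succ := by
    rw [show (k + β).succ = k + 1 + β by omega, show k.succ = k + 1 by rfl, Nat.choose_symm_add]
  rw [e1, e2]
  have h' : (((k + β).succ : ℕ) : ℝ) * ((k + β).choose k : ℝ) = ((k + β).succ.choose k.succ : ℝ) * ((k.succ : ℕ) : ℝ) := by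
    exact_mod_cast h
  push_cast at h'
  rw [pow_succ]
  push_cast
  linear_combination (-1 : ℝ) ^ k * h'

lemma jq_rec_succ (k α β s : ℕ) :
    ((k : ℝ) + 1) * jq (k + 1) α β (s + 1) = ((α : ℝ) + k + 1) * jq k α (β + 1) s
      - ((β : ℝ) + k + 1) * (jq k (α + 1) β (s + 1) - jq k (α + 1) β s) := by
  unfold jq
  have h1 := Nat.add_one_mul_choose_eq (k + β) (β + s)
  have h2 := Nat.add_one_mul_choose_eq (k + α + β + s + 1) s
  have h3 := Nat.choose_succ_succ (k + β) (β + s)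
  have h1' : ((k : ℝ) + β + 1) * ((k + β).choose (β + s) : ℝ) = ((k + 1 + β).choose (β + (s + 1)) : ℝ) * ((β : ℝ) + s + 1) := by
    rw [show k + 1 + β = (k + β).succ by omega, show β + (s + 1) = (β + s).succ by omega]
    exact_mod_cast h1
  have h2' : ((k : ℝ) + α + β + s + 2) * ((k + α + (β + 1) + s).choose s : ℝ) = ((k + 1 + α + β + (s + 1)).choose (s + 1) : ℝ) * ((s : ℝ) + 1) := by
    rw [show k + α + (β + 1) + s = k + α + β + s + 1 by omega, show k + 1 + α + β + (s + 1) = (k + α + β + s + 1).succ by omega]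
    have : (((k + α + β + s + 1).succ : ℕ) : ℝ) * ((k + α + β + s + 1).choose s : ℝ) = ((k + α + β + s + 1).succ.choose s.succ : ℝ) * ((s.succ : ℕ) : ℝ) := by
      exact_mod_cast h2
    push_cast at this
    linear_combination this
  have h3' : ((k + 1 + β).choose (β + (s + 1)) : ℝ) = ((k + β).choose (β + s) : ℝ) + ((k + β).choose (β + (s + 1)) : ℝ) := by
    rw [show k + 1 + β = (k + β).succ by omega, show β + (s + 1) = (β + s).succ by omega]
    exact_mod_cast h3
  rw [show k + (β + 1) = k + 1 + β by omega, show β + 1 + s = β + (s + 1) by omega,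
    show k + (α + 1) + β + (s + 1) = k + 1 + α + β + (s + 1) by omega,
    show k + (α + 1) + β + s = k + α + (β + 1) + s by omega,
    show (-1 : ℝ) ^ (k + 1 + (s + 1)) = (-1) ^ (k + s) by rw [show k + 1 + (s + 1) = k + s + 2 by omega, pow_add]; norm_num,
    show (-1 : ℝ) ^ (k + (s + 1)) = -(-1) ^ (k + s) by rw [← add_assoc, pow_succ]; ring]
  generalize ((k + 1 + β).choose (β + (s + 1)) : ℝ) = X at *
  generalize ((k + 1 + α + β + (s + 1)).choose (s + 1) : ℝ) = Y at *
  generalize ((k + α + (β + 1) + s).choose s : ℝ) = Z at *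
  generalize ((k + β).choose (β + s) : ℝ) = x0 at *
  generalize ((k + β).choose (β + (s + 1)) : ℝ) = x1 at *
  generalize (-1 : ℝ) ^ (k + s) = e
  have hx1 : x1 = X - x0 := by linarith
  subst hx1
  linear_combination (e * Y - e * Z) * h1' - e * X * h2'

lemma jq_zero (k α β : ℕ) : jq k α β (k + 1) = 0 := by
  unfold jq
  rw [Nat.choose_eq_zero_of_lt (by omega : k + β < β + (k + 1))]; simp

lemma jQ_rec (k α β : ℕ) (z : ℝ) :
    ((k : ℝ) + 1) * jQ (k + 1) α β z = ((α : ℝ) + k + 1) * z * jQ k α (β + 1) z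
      - ((β : ℝ) + k + 1) * (1 - z) * jQ k (α + 1) β z := by
  have e : jQ k (α + 1) β z = ∑ s ∈ Finset.range (k + 1), jq k (α + 1) β (s + 1) * z ^ (s + 1) + jq k (α + 1) β 0 := by
    have : jQ k (α + 1) β z = ∑ s ∈ Finset.range (k + 2), jq k (α + 1) β s * z ^ s := by
      rw [Finset.sum_range_succ, jq_zero]; simp [jQ]
    rw [this, Finset.sum_range_succ']; simp
  have e2 : jQ (k + 1) α β z = ∑ s ∈ Finset.range (k + 1), jq (k + 1) α β (s + 1) * z ^ (s + 1) + jq (k + 1) α β 0 := by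
    unfold jQ
    rw [Finset.sum_range_succ']; simp
  have e3 : ((β : ℝ) + k + 1) * (1 - z) * jQ k (α + 1) β z = ((β : ℝ) + k + 1) * (∑ s ∈ Finset.range (k + 1), jq k (α + 1) β (s + 1) * z ^ (s + 1) + jq k (α + 1) β 0) - ((β : ℝ) + k + 1) * z * jQ k (α + 1) β z := by
    rw [← e]; ring
  rw [e3, e2]
  unfold jQ
  have h0 := jq_rec_zero k α β
  have : ((k : ℝ) + 1) * ∑ s ∈ Finset.range (k + 1), jq (k + 1) α β (s + 1) * z ^ (s + 1) =
     (α + k + 1) * z * ∑ s ∈ Finset.range (k + 1), jq k α (β + 1) s * z ^ s -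
      (β + k + 1) * ∑ s ∈ Finset.range (k + 1), jq k (α + 1) β (s + 1) * z ^ (s + 1) +
        (β + k + 1) * z * ∑ s ∈ Finset.range (k + 1), jq k (α + 1) β s * z ^ s := by
    simp only [Finset.mul_sum, ← Finset.sum_sub_distrib, ← Finset.sum_add_distrib]
    refine Finset.sum_congr rfl fun s _ => ?_
    linear_combination z ^ (s + 1) * jq_rec_succ k α β s
  linear_combination this + h0

lemma iter_jac (k : ℕ) : ∀ (α β : ℕ) (x : ℝ),
    iteratedDeriv k (fun y : ℝ => (1 - y) ^ (α + k) * (1 + y) ^ (β + k)) x =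
      (-1) ^ k * 2 ^ k * (Nat.factorial k : ℝ) * (1 - x) ^ α * (1 + x) ^ β * jQ k α β ((1 + x) / 2) := by
  induction k with
  | zero => intro α β x; simp [jQ, jq]
  | succ k ih =>
    intro α β x
    rw [iteratedDeriv_succ']
    have hd : deriv (fun y : ℝ => (1 - y) ^ (α + (k + 1)) * (1 + y) ^ (β + (k + 1))) =
        fun y => ((β : ℝ) + k + 1) * ((1 - y) ^ (α + 1 + k) * (1 + y) ^ (β + k)) +
          (-((α : ℝ) + k + 1)) * ((1 - y) ^ (α + k) * (1 + y) ^ (β + 1 + k)) := by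
      funext y
      have h1 : HasDerivAt (fun y : ℝ => (1 - y) ^ (α + (k + 1)))
          (((α + (k + 1) : ℕ) : ℝ) * (1 - y) ^ (α + (k + 1) - 1) * (-1)) y :=
        ((hasDerivAt_id y).const_sub 1).pow _
      have h2 : HasDerivAt (fun y : ℝ => (1 + y) ^ (β + (k + 1)))
          (((β + (k + 1) : ℕ) : ℝ) * (1 + y) ^ (β + (k + 1) - 1) * 1) y :=
        ((hasDerivAt_id y).const_add 1).pow _
      have h3 := (h1.mul h2).deriv
      refine Eq.trans h3 ?_
      rw [show α + (k + 1) - 1 = α + k by omega, show β + (k + 1) - 1 = β + k by omega]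
      push_cast
      ring
    rw [hd, iteratedDeriv_fun_add (by fun_prop) (by fun_prop), iteratedDeriv_const_mul_field, iteratedDeriv_const_mul_field, ih, ih]
    have := jQ_rec k α β ((1 + x) / 2)
    rw [Nat.factorial_succ]
    push_cast
    generalize jQ k α (β + 1) ((1 + x) / 2) = A at *
    generalize jQ k (α + 1) β ((1 + x) / 2) = B at *
    generalize jQ (k + 1) α β ((1 + x) / 2) = C at *
    ring_nf
    ring_nf at this
    linear_combination (2 * (-1) ^ k * 2 ^ k * (Nat.factorial k : ℝ) * (1 - x) ^ α * (1 + x) ^ β) * this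

lemma jac_eval (J : ℕ → ℕ → ℕ → ℝ → ℝ) (hJ : IsJacobi J) (k α β : ℕ) (r : ℝ) (hr : r ∈ Set.Ioo 0 (π / 2)) :
    J k α β (Real.cos (2 * r)) = jQ k α β (Real.cos r ^ 2) := by
  have hc : 0 < Real.cos r := Real.cos_pos_of_mem_Ioo ⟨by linarith [hr.1, Real.pi_pos], hr.2⟩
  have hs : 0 < Real.sin r := Real.sin_pos_of_pos_of_lt_pi hr.1 (by linarith [hr.2, Real.pi_pos])
  have hsc := Real.sin_sq_add_cos_sq r
  have e : Real.cos (2 * r) = 2 * Real.cos r ^ 2 - 1 := Real.cos_two_mul r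
  have h1 : 0 < 1 - Real.cos (2 * r) := by rw [e]; nlinarith
  have h2 : 0 < 1 + Real.cos (2 * r) := by rw [e]; nlinarith
  rw [(hJ k α β).2 _ ⟨by linarith, by linarith⟩, jacobiFormula, iter_jac, show (1 + Real.cos (2 * r)) / 2 = Real.cos r ^ 2 by rw [e]; ring]
  rw [zpow_neg, zpow_neg, zpow_natCast, zpow_natCast]
  have : ((-1 : ℝ) ^ k) * (-1) ^ k = 1 := by rw [← mul_pow]; simp
  have hf : (Nat.factorial k : ℝ) ≠ 0 := by positivity
  field_simp
  linear_combination jQ k α β (Real.cos r ^ 2) * this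

def bb (p : ℕ) : ℕ → ℝ
  | 0 => 1
  | s + 1 => (Nat.choose p (s + 1) : ℝ) - (Nat.choose p s : ℝ)

lemma bb_pascal (p s : ℕ) : bb (p + 1) (s + 1) = bb p (s + 1) + bb p s := by
  cases s with
  | zero => simp [bb]
  | succ s => simp only [bb, Nat.choose_succ_succ p (s + 1), Nat.choose_succ_succ p s]; push_cast; ring

lemma bb_mid (q : ℕ) : bb (2 * q + 1) (q + 1) = 0 := by
  simp only [bb]
  rw [Nat.choose_symm_half]; simp

lemma bb_fact (m s : ℕ) : bb (m + 2 * s) s * (Nat.factorial s : ℝ) * (Nat.factorial (m + 1 + s) : ℝ) =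
    (Nat.factorial (m + 2 * s) : ℝ) * (m + 1) := by
  cases s with
  | zero => simp [bb, Nat.factorial_succ]; ring
  | succ s =>
    simp only [bb]
    have h1 := Nat.add_choose_mul_factorial_mul_factorial (m + s + 1) (s + 1)
    have h2 := Nat.add_choose_mul_factorial_mul_factorial (m + s + 2) s
    rw [show m + s + 1 + (s + 1) = m + 2 * (s + 1) by omega] at h1
    rw [show m + s + 2 + s = m + 2 * (s + 1) by omega] at h2
    have h1' : ((m + 2 * (s + 1)).choose (s + 1) : ℝ) * (Nat.factorial (m + s + 1) : ℝ) * (Nat.factorial (s + 1) : ℝ) = (Nat.factorial (m + 2 * (s + 1)) : ℝ) := by exact_mod_cast h1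
    have h2' : ((m + 2 * (s + 1)).choose s : ℝ) * (Nat.factorial (m + s + 2) : ℝ) * (Nat.factorial s : ℝ) = (Nat.factorial (m + 2 * (s + 1)) : ℝ) := by exact_mod_cast h2
    rw [show m + 1 + (s + 1) = m + s + 1 + 1 by omega, Nat.factorial_succ (m + s + 1), Nat.factorial_succ s]
    rw [show m + s + 2 = m + s + 1 + 1 by omega, Nat.factorial_succ (m + s + 1)] at h2'
    rw [Nat.factorial_succ s] at h1'
    push_cast at *
    linear_combination ((m : ℝ) + s + 1 + 1) * h1' - ((s : ℝ) + 1) * h2'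

lemma ballot (w : ℂ) (p : ℕ) :
    ∑ s ∈ Finset.range (p / 2 + 1), (bb p s : ℂ) * Complex.sin (((p : ℂ) + 1 - 2 * s) * w) = (2 * Complex.cos w) ^ p * Complex.sin w := by
  induction p with
  | zero => simp [bb]
  | succ p ih =>
    have key : ∀ s : ℕ, 2 * Complex.cos w * Complex.sin (((p : ℂ) + 1 - 2 * s) * w) =
        Complex.sin (((p : ℂ) + 2 - 2 * s) * w) + Complex.sin (((p : ℂ) + 2 - 2 * (s + 1 : ℕ)) * w) := by
      intro s
      rw [show ((p : ℂ) + 2 - 2 * s) * w = ((p : ℂ) + 1 - 2 * s) * w + w by ring,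
        show ((p : ℂ) + 2 - 2 * (s + 1 : ℕ)) * w = ((p : ℂ) + 1 - 2 * s) * w - w by push_cast; ring,
        Complex.sin_add, Complex.sin_sub]
      ring
    have e1 : (2 * Complex.cos w) ^ (p + 1) * Complex.sin w =
       ∑ s ∈ Finset.range (p / 2 + 1), (bb p s : ℂ) * Complex.sin (((p : ℂ) + 2 - 2 * s) * w)
       + ∑ s ∈ Finset.range (p / 2 + 1), (bb p s : ℂ) * Complex.sin (((p : ℂ) + 2 - 2 * (s + 1 : ℕ)) * w) := by
      rw [pow_succ, mul_right_comm, ← ih, Finset.sum_mul, ← Finset.sum_add_distrib]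
      refine Finset.sum_congr rfl fun s _ => ?_
      rw [mul_assoc, mul_comm (Complex.sin _), key]; ring
    have e2 : (bb p (p / 2 + 1) : ℂ) * Complex.sin (((p : ℂ) + 2 - 2 * (p / 2 + 1 : ℕ)) * w) = 0 := by
      rcases Nat.even_or_odd' p with ⟨q, h | h⟩
      · rw [h, show 2 * q / 2 = q by omega]; push_cast; ring_nf; simp
      · rw [h, show (2 * q + 1) / 2 = q by omega, bb_mid]; simp
    have e3 : ∑ s ∈ Finset.range ((p + 1) / 2 + 1), (bb (p + 1) s : ℂ) * Complex.sin ((((p + 1 : ℕ) : ℂ) + 1 - 2 * s) * w)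
       = ∑ s ∈ Finset.range (p / 2 + 1 + 1), (bb (p + 1) s : ℂ) * Complex.sin (((p : ℂ) + 2 - 2 * s) * w) := by
      have : ∀ s : ℕ, (((p + 1 : ℕ) : ℂ) + 1 - 2 * s) = ((p : ℂ) + 2 - 2 * s) := by intro s; push_cast; ring
      simp only [this]
      rcases Nat.even_or_odd' p with ⟨q, h | h⟩
      · rw [Finset.sum_range_succ _ (p / 2 + 1)]
        have h0 : Complex.sin (((p : ℂ) + 2 - 2 * (p / 2 + 1 : ℕ)) * w) = 0 := by
          rw [h, show 2 * q / 2 = q by omega]; push_cast; ring_nf; simp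
        rw [h0, show (p + 1) / 2 = p / 2 by omega]; simp
      · rw [show (p + 1) / 2 = p / 2 + 1 by omega]
    rw [e3, Finset.sum_range_succ', e1]
    have e4 : ∑ s ∈ Finset.range (p / 2 + 1), (bb p s : ℂ) * Complex.sin (((p : ℂ) + 2 - 2 * s) * w) =
       ∑ s ∈ Finset.range (p / 2 + 1), (bb p (s + 1) : ℂ) * Complex.sin (((p : ℂ) + 2 - 2 * (s + 1 : ℕ)) * w) + (bb p 0 : ℂ) * Complex.sin (((p : ℂ) + 2 - 2 * (0 : ℕ)) * w) := by
      have h := Finset.sum_range_succ' (fun s : ℕ => (bb p s : ℂ) * Complex.sin (((p : ℂ) + 2 - 2 * (s : ℕ)) * w)) (p / 2 + 1)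
      rw [Finset.sum_range_succ _ (p / 2 + 1), e2, add_zero] at h
      exact h
    rw [e4]
    have e5 : bb (p + 1) 0 = bb p 0 := rfl
    rw [e5, add_right_comm, ← Finset.sum_add_distrib]
    congr 1
    refine Finset.sum_congr rfl fun s _ => ?_
    rw [bb_pascal]; push_cast; ring

open Polynomial in
noncomputable def eP (lam l : ℕ) : ℂ[X] := ∑ j ∈ Finset.range (l / 2 + 1),
  C ((-1 : ℂ) ^ j * ((Nat.factorial (l - j + lam) : ℂ) / ((Nat.factorial j : ℂ) * (Nat.factorial (l - 2 * j) : ℂ)))) * (2 * X) ^ (l - 2 * j)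

open Polynomial in
lemma eP_deriv (lam l : ℕ) : derivative (eP lam (l + 1)) = 2 * eP (lam + 1) l := by
  unfold eP
  have e : ∑ j ∈ Finset.range ((l + 1) / 2 + 1), derivative (C ((-1 : ℂ) ^ j * ((Nat.factorial (l + 1 - j + lam) : ℂ) / ((Nat.factorial j : ℂ) * (Nat.factorial (l + 1 - 2 * j) : ℂ)))) * (2 * X) ^ (l + 1 - 2 * j))
    = ∑ j ∈ Finset.range (l / 2 + 1), derivative (C ((-1 : ℂ) ^ j * ((Nat.factorial (l + 1 - j + lam) : ℂ) / ((Nat.factorial j : ℂ) * (Nat.factorial (l + 1 - 2 * j) : ℂ)))) * (2 * X) ^ (l + 1 - 2 * j)) := by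
    rcases Nat.even_or_odd' l with ⟨q, h | h⟩
    · rw [show (l + 1) / 2 = l / 2 by omega]
    · rw [show (l + 1) / 2 = l / 2 + 1 by omega, Finset.sum_range_succ _ (l / 2 + 1), show l + 1 - 2 * (l / 2 + 1) = 0 by omega]
      simp
  rw [derivative_sum, e, Finset.mul_sum]
  refine Finset.sum_congr rfl fun j hj => ?_
  have hj' : 2 * j ≤ l := by have := Finset.mem_range.1 hj; omega
  rw [derivative_C_mul, derivative_pow, show l + 1 - 2 * j - 1 = l - 2 * j by omega]
  have h2 : derivative (2 * X : ℂ[X]) = C 2 := by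
    rw [show (2 : ℂ[X]) = C 2 from (map_ofNat C 2).symm, derivative_C_mul_X]
  rw [h2, show l + 1 - j + lam = l - j + (lam + 1) by omega, show l + 1 - 2 * j = (l - 2 * j) + 1 by omega, Nat.factorial_succ (l - 2 * j),
    show (2 : ℂ[X]) * (C ((-1 : ℂ) ^ j * ((Nat.factorial (l - j + (lam + 1)) : ℂ) / ((Nat.factorial j : ℂ) * (Nat.factorial (l - 2 * j) : ℂ)))) * (2 * X) ^ (l - 2 * j)) = C (2 * ((-1 : ℂ) ^ j * ((Nat.factorial (l - j + (lam + 1)) : ℂ) / ((Nat.factorial j : ℂ) * (Nat.factorial (l - 2 * j) : ℂ))))) * (2 * X) ^ (l - 2 * j) by rw [C_mul (a := (2 : ℂ)), map_ofNat C 2, mul_assoc]]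
  rw [mul_right_comm, ← mul_assoc, ← mul_assoc, ← C_mul, ← C_mul]
  congr 2
  have : ((l - 2 * j : ℕ) : ℂ) + 1 ≠ 0 := Nat.cast_add_one_ne_zero _
  have h3 : (Nat.factorial j : ℂ) ≠ 0 := by exact_mod_cast Nat.factorial_ne_zero _
  have h4 : (Nat.factorial (l - 2 * j) : ℂ) ≠ 0 := by exact_mod_cast Nat.factorial_ne_zero _
  push_cast
  field_simp

open Polynomial in
noncomputable def uP (l : ℕ) : ℂ[X] := ∑ j ∈ Finset.range (l + 1),
  C ((-1 : ℂ) ^ j * (Nat.choose (l - j) j : ℂ)) * (2 * X) ^ (l - 2 * j)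

open Polynomial in
lemma eP_zero (l : ℕ) : eP 0 l = uP l := by
  unfold eP uP
  have hs : Finset.range (l / 2 + 1) ⊆ Finset.range (l + 1) := by
    intro a; simp; omega
  rw [← Finset.sum_subset hs]
  · refine Finset.sum_congr rfl fun j hj => ?_
    have hj' : 2 * j ≤ l := by have := Finset.mem_range.1 hj; omega
    rw [add_zero, Nat.cast_choose ℂ (by omega : j ≤ l - j), show l - j - j = l - 2 * j by omega]
  · intro j _ hj
    rw [Nat.choose_eq_zero_of_lt (by simp at hj; omega)]; simp

open Polynomial in
lemma uP_rec (l : ℕ) : uP (l + 2) = 2 * X * uP (l + 1) - uP l := by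
  unfold uP
  have e1 : ∀ L : ℕ, ∑ j ∈ Finset.range (L + 1), C ((-1 : ℂ) ^ j * (Nat.choose (L - j) j : ℂ)) * (2 * X) ^ (L - 2 * j) = ∑ j ∈ Finset.range (L + 1), C ((-1 : ℂ) ^ (j + 1) * (Nat.choose (L - (j + 1)) (j + 1) : ℂ)) * (2 * X) ^ (L - 2 * (j + 1)) + (2 * X) ^ L := by
    intro L
    have : ∑ j ∈ Finset.range (L + 1), C ((-1 : ℂ) ^ j * (Nat.choose (L - j) j : ℂ)) * (2 * X) ^ (L - 2 * j)
       = ∑ j ∈ Finset.range (L + 2), C ((-1 : ℂ) ^ j * (Nat.choose (L - j) j : ℂ)) * (2 * X) ^ (L - 2 * j) := by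
      rw [Finset.sum_range_succ _ (L + 1), Nat.choose_eq_zero_of_lt (by omega)]; simp
    rw [this, Finset.sum_range_succ']
    simp
  rw [e1 (l + 2), e1 (l + 1), mul_add, Finset.mul_sum, ← pow_succ']
  have ext : ∑ j ∈ Finset.range (l + 2 + 1), C ((-1 : ℂ) ^ (j + 1) * (Nat.choose (l + 2 - (j + 1)) (j + 1) : ℂ)) * (2 * X) ^ (l + 2 - 2 * (j + 1)) = ∑ j ∈ Finset.range (l + 1), C ((-1 : ℂ) ^ (j + 1) * (Nat.choose (l + 2 - (j + 1)) (j + 1) : ℂ)) * (2 * X) ^ (l + 2 - 2 * (j + 1)) := by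
    rw [Finset.sum_range_succ, Finset.sum_range_succ, Nat.choose_eq_zero_of_lt (by omega : l + 2 - (l + 1 + 1) < l + 1 + 1), Nat.choose_eq_zero_of_lt (by omega : l + 2 - (l + 2 + 1) < l + 2 + 1)]; simp
  have ext2 : ∑ j ∈ Finset.range (l + 1 + 1), 2 * X * (C ((-1 : ℂ) ^ (j + 1) * (Nat.choose (l + 1 - (j + 1)) (j + 1) : ℂ)) * (2 * X) ^ (l + 1 - 2 * (j + 1))) = ∑ j ∈ Finset.range (l + 1), 2 * X * (C ((-1 : ℂ) ^ (j + 1) * (Nat.choose (l + 1 - (j + 1)) (j + 1) : ℂ)) * (2 * X) ^ (l + 1 - 2 * (j + 1))) := by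
    rw [Finset.sum_range_succ, Nat.choose_eq_zero_of_lt (by omega)]; simp
  rw [ext, ext2, add_sub_right_comm, ← Finset.sum_sub_distrib]
  congr 1
  refine Finset.sum_congr rfl fun j hj => ?_
  have hj1 : j ≤ l := by have := Finset.mem_range.1 hj; omega
  rw [show l + 2 - (j + 1) = (l - j) + 1 by omega, show l + 1 - (j + 1) = l - j by omega, show l + 2 - 2 * (j + 1) = l - 2 * j by omega, Nat.choose_succ_succ]
  by_cases h : l + 1 < 2 * (j + 1)
  · rw [Nat.choose_eq_zero_of_lt (by omega : l - j < j + 1)]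
    simp [pow_succ]
  · rw [show l - 2 * j = l + 1 - 2 * (j + 1) + 1 by omega, pow_succ' (2 * X : ℂ[X])]
    push_cast
    simp only [mul_add, C_add, pow_succ, C_mul, C_neg, C_1]
    ring

open Polynomial in
lemma U_eq_uP (l : ℕ) : Chebyshev.U ℂ (l : ℤ) = uP l := by
  induction l using Nat.twoStepInduction with
  | zero => simp [uP]
  | one => simp [uP, Finset.sum_range_succ]
  | more l h1 h2 =>
    rw [uP_rec, ← h1, ← h2]
    exact_mod_cast Chebyshev.U_add_two ℂ l

open Polynomial in
lemma U_iter (i l : ℕ) : derivative^[i] (Chebyshev.U ℂ ((l + i : ℕ) : ℤ)) = 2 ^ i * eP i l := by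
  rw [U_eq_uP, ← eP_zero]
  have : ∀ i a l : ℕ, derivative^[i] (eP a (l + i)) = 2 ^ i * eP (a + i) l := by
    intro i
    induction i with
    | zero => intro a l; simp
    | succ i ih =>
      intro a l
      rw [Function.iterate_succ_apply, ← add_assoc, eP_deriv, show (2 : ℂ[X]) * eP (a + 1) (l + i) = C 2 * eP (a + 1) (l + i) by rw [map_ofNat C 2], iterate_derivative_C_mul, ih, show a + 1 + i = a + (i + 1) by omega]
      rw [pow_succ]
      simp only [map_ofNat]
      ring
  simpa using this i 0 l

open Polynomial in
lemma T_iter (i l : ℕ) : derivative^[i + 1] (Chebyshev.T ℂ ((l + i + 1 : ℕ) : ℤ)) = ((l + i + 1 : ℕ) : ℂ[X]) * (2 ^ i * eP i l) := by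
  rw [Function.iterate_succ_apply, Chebyshev.T_derivative_eq_U, ← U_iter,
    show (((l + i + 1 : ℕ) : ℤ) - 1) = ((l + i : ℕ) : ℤ) by push_cast; ring]
  rw [show (((l + i + 1 : ℕ) : ℤ) : ℂ[X]) = C ((l + i + 1 : ℕ) : ℂ) by simp, iterate_derivative_C_mul]
  simp

noncomputable def aC (n m k : ℕ) (c : ℝ) : ℝ := ((m : ℝ) + 1) * (Nat.choose (k + m + 2 * n) (2 * n - 1) : ℝ) * c ^ m * jQ k (2 * n - 1) (m + 1) (c ^ 2)

lemma term_id (n m s j : ℕ) (hn : 1 ≤ n) (c : ℝ) :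
    ((m : ℝ) + 1) * (Nat.choose (s + j + m + 2 * n) (2 * n - 1) : ℝ) * c ^ m * (jq (s + j) (2 * n - 1) (m + 1) s * (c ^ 2) ^ s) =
    ((-1) ^ j * (Nat.factorial (j + (m + 2 * s) + 2 * n) : ℝ) / ((Nat.factorial (2 * n - 1) : ℝ) * (Nat.factorial j : ℝ) * (Nat.factorial (m + 2 * s) : ℝ)) * c ^ (m + 2 * s)) * bb (m + 2 * s) s := by
  obtain ⟨q, hq⟩ : ∃ q, 2 * n = q + 1 := ⟨2 * n - 1, by omega⟩
  rw [hq, show q + 1 - 1 = q by omega]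
  unfold jq
  have hb := bb_fact m s
  have f1 := Nat.add_choose_mul_factorial_mul_factorial (s + j + m + 1) q
  have f2 := Nat.add_choose_mul_factorial_mul_factorial j (m + 1 + s)
  have f3 := Nat.add_choose_mul_factorial_mul_factorial (s + j + q + (m + 1)) s
  rw [show s + j + m + 1 + q = s + j + m + (q + 1) by omega] at f1
  rw [show j + (m + 1 + s) = s + j + (m + 1) by omega] at f2
  rw [show j + (m + 2 * s) + (q + 1) = s + j + q + (m + 1) + s by omega]
  rw [show s + j + q + (m + 1) = s + j + m + (q + 1) by omega] at *
  rw [show s + j + m + 1 = s + j + (m + 1) by omega] at f1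
  have f1' : ((s + j + m + (q + 1)).choose q : ℝ) * (Nat.factorial (s + j + (m + 1)) : ℝ) * (Nat.factorial q : ℝ) = (Nat.factorial (s + j + m + (q + 1)) : ℝ) := by exact_mod_cast f1
  have f2' : ((s + j + (m + 1)).choose (m + 1 + s) : ℝ) * (Nat.factorial j : ℝ) * (Nat.factorial (m + 1 + s) : ℝ) = (Nat.factorial (s + j + (m + 1)) : ℝ) := by exact_mod_cast f2
  have f3' : ((s + j + m + (q + 1) + s).choose s : ℝ) * (Nat.factorial (s + j + m + (q + 1)) : ℝ) * (Nat.factorial s : ℝ) = (Nat.factorial (s + j + m + (q + 1) + s) : ℝ) := by exact_mod_cast f3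
  have hpos : ∀ x : ℕ, (Nat.factorial x : ℝ) ≠ 0 := fun x => by positivity
  rw [show (-1 : ℝ) ^ (s + j + s) = (-1) ^ j by rw [show s + j + s = j + 2 * s by omega, pow_add, pow_mul]; simp]
  rw [← pow_mul, pow_add c m]
  have g1 := hpos q
  have g2 := hpos (s + j + (m + 1))
  have g3 := hpos (m + 1 + s)
  have g4 := hpos j
  have g5 := hpos s
  have g6 := hpos (s + j + m + (q + 1))
  have g7 := hpos (m + 2 * s)
  have hb' : bb (m + 2 * s) s = (Nat.factorial (m + 2 * s) : ℝ) * (m + 1) / ((Nat.factorial s : ℝ) * (Nat.factorial (m + 1 + s) : ℝ)) := by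
    rw [eq_div_iff (by positivity)]; linarith
  rw [hb', ← f3', ← f1', ← f2']
  field_simp

noncomputable def gT (n l : ℕ) (c : ℝ) (w : ℂ) (s j : ℕ) : ℂ :=
  ((((-1) ^ j * (Nat.factorial (l - j + 2 * n) : ℝ) / ((Nat.factorial (2 * n - 1) : ℝ) * (Nat.factorial j : ℝ) * (Nat.factorial (l - 2 * j) : ℝ)) * c ^ (l - 2 * j) : ℝ)) * bb (l - 2 * j) s : ℂ) * Complex.sin ((((l - 2 * j : ℕ) : ℂ) + 1 - 2 * s) * w)

open Polynomial in
lemma main_alg (n l : ℕ) (hn : 1 ≤ n) (c : ℝ) (w : ℂ) :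
    ((l : ℂ) + 2 * n + 1) * ∑ k ∈ Finset.range (l / 2 + 1), (aC n (l - 2 * k) k c : ℂ) * Complex.sin ((((l - 2 * k : ℕ) : ℂ) + 1) * w) =
     (2 ^ (2 * n) * (Nat.factorial (2 * n - 1) : ℂ))⁻¹ * (Complex.sin w * (derivative^[2 * n + 1] (Chebyshev.T ℂ ((l + 2 * n + 1 : ℕ) : ℤ))).eval (c * Complex.cos w)) := by
  rw [T_iter]
  have hL : ∀ k ∈ Finset.range (l / 2 + 1), (aC n (l - 2 * k) k c : ℂ) * Complex.sin ((((l - 2 * k : ℕ) : ℂ) + 1) * w)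
     = ∑ s ∈ Finset.range (k + 1), gT n l c w s (k - s) := by
    intro k hk
    have hk' : 2 * k ≤ l := by have := Finset.mem_range.1 hk; omega
    unfold aC jQ gT
    rw [Finset.mul_sum]
    push_cast
    rw [Finset.sum_mul]
    refine Finset.sum_congr rfl fun s hs => ?_
    obtain ⟨j, rfl⟩ : ∃ j, k = s + j := ⟨k - s, by have := Finset.mem_range.1 hs; omega⟩
    obtain ⟨m, rfl⟩ : ∃ m, l = m + 2 * (s + j) := ⟨l - 2 * (s + j), by omega⟩
    have := term_id n m s j hn c
    rw [show m + 2 * (s + j) - 2 * (s + j) = m by omega, show s + j - s = j by omega, show m + 2 * (s + j) - j = j + (m + 2 * s) by omega, show m + 2 * (s + j) - 2 * j = m + 2 * s by omega]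
    have t2 := congrArg (fun x : ℝ => (x : ℂ)) this
    push_cast at t2
    rw [t2]
    congr 2
    push_cast; ring
  rw [Finset.sum_congr rfl hL, Finset.sum_range_diag_flip, Finset.sum_sigma']
  have flip : ∑ x ∈ (Finset.range (l / 2 + 1)).sigma (fun m => Finset.range (l / 2 + 1 - m)), gT n l c w x.1 x.2
    = ∑ x ∈ (Finset.range (l / 2 + 1)).sigma (fun m => Finset.range (l / 2 + 1 - m)), gT n l c w x.2 x.1 := by
    refine Finset.sum_bij' (fun x _ => ⟨x.2, x.1⟩) (fun x _ => ⟨x.2, x.1⟩) ?_ ?_ ?_ ?_ ?_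
    · intro a ha; simp at ha ⊢; omega
    · intro a ha; simp at ha ⊢; omega
    · intros; rfl
    · intros; rfl
    · intros; rfl
  rw [flip, Finset.sum_sigma]
  simp only [eval_mul, eval_natCast, eval_pow, eval_ofNat]
  have hR : ∀ j ∈ Finset.range (l / 2 + 1), ∑ s ∈ Finset.range (l / 2 + 1 - j), gT n l c w s j
     = (Nat.factorial (2 * n - 1) : ℂ)⁻¹ * Complex.sin w * (((-1 : ℂ) ^ j * ((Nat.factorial (l - j + 2 * n) : ℂ) / ((Nat.factorial j : ℂ) * (Nat.factorial (l - 2 * j) : ℂ)))) * (2 * (c * Complex.cos w)) ^ (l - 2 * j)) := by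
    intro j hj
    have hj' : 2 * j ≤ l := by have := Finset.mem_range.1 hj; omega
    rw [show l / 2 + 1 - j = (l - 2 * j) / 2 + 1 by omega]
    unfold gT
    simp only [mul_assoc]
    rw [← Finset.mul_sum, ballot, show (2 * (c * Complex.cos w)) = c * (2 * Complex.cos w) by ring, mul_pow (c : ℂ)]
    push_cast
    field_simp
  rw [Finset.sum_congr rfl hR, ← Finset.mul_sum]
  have he : (eP (2 * n) l).eval (c * Complex.cos w) = ∑ j ∈ Finset.range (l / 2 + 1), (((-1 : ℂ) ^ j * ((Nat.factorial (l - j + 2 * n) : ℂ) / ((Nat.factorial j : ℂ) * (Nat.factorial (l - 2 * j) : ℂ)))) * (2 * (c * Complex.cos w)) ^ (l - 2 * j)) := by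
    unfold eP
    rw [eval_finsetSum]
    refine Finset.sum_congr rfl fun j _ => ?_
    simp
  rw [he]
  push_cast
  have h2 : (2 : ℂ) ^ (2 * n) ≠ 0 := pow_ne_zero _ two_ne_zero
  field_simp

def Om (z : ℂ) : Prop := |‖z + 1‖ - ‖z - 1‖| < 2
noncomputable def sS (z : ℂ) : ℂ := Complex.exp (Complex.log (1 - z ^ 2) / 2)
noncomputable def AA (z : ℂ) : ℂ := -Complex.I * Complex.log (z + Complex.I * sS z)

lemma Om_slit {z : ℂ} (h : Om z) : 1 - z ^ 2 ∈ Complex.slitPlane := by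
  rw [Complex.mem_slitPlane_iff_not_le_zero, Complex.le_def]
  rintro ⟨h1, h2⟩
  have e1 : z.re * z.im = 0 := by
    simp [pow_two] at h2; linarith
  have e2 : 1 - z.re ^ 2 + z.im ^ 2 ≤ 0 := by
    simp [pow_two] at h1; nlinarith
  have hx : z.re ≠ 0 := by rintro h0; rw [h0] at e2; nlinarith [sq_nonneg z.im]
  have hy : z.im = 0 := by simpa [hx] using e1
  have hz : z = (z.re : ℂ) := Complex.ext (by simp) (by simp [hy])
  unfold Om at h
  rw [hz, show ((z.re : ℂ) + 1) = ((z.re + 1 : ℝ) : ℂ) by push_cast; ring, show ((z.re : ℂ) - 1) = ((z.re - 1 : ℝ) : ℂ) by push_cast; ring, Complex.norm_real, Complex.norm_real] at h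
  rw [hy] at e2
  have h3 : 1 ≤ z.re ^ 2 := by linarith
  simp only [Real.norm_eq_abs] at h
  rcases le_or_gt 0 z.re with h0 | h0
  · have : 1 ≤ z.re := by nlinarith
    rw [abs_of_nonneg (by linarith : 0 ≤ z.re + 1), abs_of_nonneg (by linarith : 0 ≤ z.re - 1)] at h
    norm_num at h
  · have : z.re ≤ -1 := by nlinarith
    rw [abs_of_nonpos (by linarith : z.re + 1 ≤ 0), abs_of_nonpos (by linarith : z.re - 1 ≤ 0)] at h
    rw [show -(z.re + 1) - -(z.re - 1) = -2 by ring] at h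
    norm_num at h

lemma sS_sq {z : ℂ} (h : Om z) : sS z ^ 2 = 1 - z ^ 2 := by
  unfold sS
  rw [← Complex.exp_nat_mul, show ((2 : ℕ) : ℂ) * (Complex.log (1 - z ^ 2) / 2) = Complex.log (1 - z ^ 2) by push_cast; ring, Complex.exp_log (Complex.slitPlane_ne_zero (Om_slit h))]

lemma sq_re_pos {z : ℂ} (h : Om z) : 0 < (sS z).re := by
  unfold sS
  rw [Complex.exp_re]
  refine mul_pos (Real.exp_pos _) ?_
  have e : (Complex.log (1 - z ^ 2) / 2).im = Complex.arg (1 - z ^ 2) / 2 := by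
    rw [show (Complex.log (1 - z ^ 2) / 2) = Complex.log (1 - z ^ 2) / ((2 : ℝ) : ℂ) by simp, Complex.div_ofReal_im, Complex.log_im]
  rw [e]
  have h1 := Complex.neg_pi_lt_arg (1 - z ^ 2)
  have h2 : Complex.arg (1 - z ^ 2) < π := lt_of_le_of_ne (Complex.arg_le_pi _) (Complex.mem_slitPlane_iff_arg.1 (Om_slit h)).1
  exact Real.cos_pos_of_mem_Ioo ⟨by linarith, by linarith⟩

lemma sq_ne {z : ℂ} (h : Om z) : sS z ≠ 0 := by
  intro h0; have := sq_re_pos h; rw [h0] at this; simp at this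

lemma e_mul {z : ℂ} (h : Om z) : (z + Complex.I * sS z) * (z - Complex.I * sS z) = 1 := by
  have := sS_sq h
  linear_combination this - sS z ^ 2 * Complex.I_sq

lemma e_slit {z : ℂ} (h : Om z) : z + Complex.I * sS z ∈ Complex.slitPlane := by
  rw [Complex.mem_slitPlane_iff]
  right
  intro h0
  have h1 := e_mul h
  have h2 := sq_re_pos h
  set e := z + Complex.I * sS z with he
  set e' := z - Complex.I * sS z with he'
  have h3 : e - e' = 2 * Complex.I * sS z := by rw [he, he']; ring
  have h4 : (e - e').im = 2 * (sS z).re := by rw [h3]; simp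
  have h5 := congrArg Complex.im h1
  have h6 := congrArg Complex.re h1
  simp [h0] at h5 h6 h4
  rcases h5 with h5 | h5
  · rw [h5] at h6; simp at h6
  · rw [h5] at h4; linarith

lemma exp_I_AA {z : ℂ} (h : Om z) : Complex.exp (AA z * Complex.I) = z + Complex.I * sS z := by
  unfold AA
  rw [show -Complex.I * Complex.log (z + Complex.I * sS z) * Complex.I = - (Complex.I * Complex.I) * Complex.log (z + Complex.I * sS z) by ring, Complex.I_mul_I, neg_neg, one_mul, Complex.exp_log (Complex.slitPlane_ne_zero (e_slit h))]

lemma exp_nI_AA {z : ℂ} (h : Om z) : Complex.exp (-AA z * Complex.I) = z - Complex.I * sS z := by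
  rw [neg_mul, Complex.exp_neg, exp_I_AA h]
  exact inv_eq_of_mul_eq_one_right (e_mul h)

lemma cos_AA {z : ℂ} (h : Om z) : Complex.cos (AA z) = z := by
  rw [Complex.cos, exp_I_AA h, exp_nI_AA h]; ring

lemma sin_AA {z : ℂ} (h : Om z) : Complex.sin (AA z) = sS z := by
  rw [Complex.sin, exp_I_AA h, exp_nI_AA h]
  linear_combination (-sS z) * Complex.I_sq

lemma cos_re_eq (A : ℂ) : (Complex.cos A).re = Real.cos A.re * Real.cosh A.im := by
  conv_lhs => rw [← Complex.re_add_im A, Complex.cos_add_mul_I]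
  simp [← Complex.ofReal_cos, ← Complex.ofReal_sin, ← Complex.ofReal_cosh, ← Complex.ofReal_sinh]
lemma cos_im_eq (A : ℂ) : (Complex.cos A).im = - (Real.sin A.re * Real.sinh A.im) := by
  conv_lhs => rw [← Complex.re_add_im A, Complex.cos_add_mul_I]
  simp [← Complex.ofReal_cos, ← Complex.ofReal_sin, ← Complex.ofReal_cosh, ← Complex.ofReal_sinh]
lemma sin_re_eq (A : ℂ) : (Complex.sin A).re = Real.sin A.re * Real.cosh A.im := by
  conv_lhs => rw [← Complex.re_add_im A, Complex.sin_add_mul_I]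
  simp [← Complex.ofReal_cos, ← Complex.ofReal_sin, ← Complex.ofReal_cosh, ← Complex.ofReal_sinh]
lemma sin_im_eq (A : ℂ) : (Complex.sin A).im = Real.cos A.re * Real.sinh A.im := by
  conv_lhs => rw [← Complex.re_add_im A, Complex.sin_add_mul_I]
  simp [← Complex.ofReal_cos, ← Complex.ofReal_sin, ← Complex.ofReal_cosh, ← Complex.ofReal_sinh]

lemma AA_re {z : ℂ} (h : Om z) : 0 < (AA z).re ∧ (AA z).re < π := by
  have h1 : (AA z).re = Complex.arg (z + Complex.I * sS z) := by
    unfold AA; rw [neg_mul, Complex.neg_re, Complex.I_mul_re, neg_neg, Complex.log_im]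
  have h2 : (AA z).re < π := by
    rw [h1]; exact lt_of_le_of_ne (Complex.arg_le_pi _) (Complex.mem_slitPlane_iff_arg.1 (e_slit h)).1
  have h3 : -π < (AA z).re := by rw [h1]; exact Complex.neg_pi_lt_arg _
  have h4 := sq_re_pos h
  rw [← sin_AA h, sin_re_eq] at h4
  have h5 : 0 < Real.sin (AA z).re := by
    have := Real.cosh_pos (AA z).im
    exact pos_of_mul_pos_left h4 this.le
  refine ⟨?_, h2⟩
  by_contra h6
  have := Real.sin_nonpos_of_nonpos_of_neg_pi_le (not_lt.1 h6) h3.le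
  linarith

lemma norm_cos_add_one (A : ℂ) : ‖Complex.cos A + 1‖ = Real.cosh A.im + Real.cos A.re := by
  have h0 : 0 ≤ Real.cosh A.im + Real.cos A.re := by linarith [Real.one_le_cosh A.im, Real.neg_one_le_cos A.re]
  rw [← sq_eq_sq₀ (norm_nonneg _) h0, Complex.sq_norm, Complex.normSq_apply]
  simp only [Complex.add_re, Complex.add_im, Complex.one_re, Complex.one_im, cos_re_eq, cos_im_eq]
  have h1 := Real.sin_sq_add_cos_sq A.re
  have h2 := Real.cosh_sq A.im
  linear_combination (Real.sinh A.im ^ 2) * h1 + (Real.cos A.re ^ 2 - 1) * h2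

lemma norm_cos_sub_one (A : ℂ) : ‖Complex.cos A - 1‖ = Real.cosh A.im - Real.cos A.re := by
  have h0 : 0 ≤ Real.cosh A.im - Real.cos A.re := by linarith [Real.one_le_cosh A.im, Real.cos_le_one A.re]
  rw [← sq_eq_sq₀ (norm_nonneg _) h0, Complex.sq_norm, Complex.normSq_apply]
  simp only [Complex.sub_re, Complex.sub_im, Complex.one_re, Complex.one_im, cos_re_eq, cos_im_eq]
  have h1 := Real.sin_sq_add_cos_sq A.re
  have h2 := Real.cosh_sq A.im
  linear_combination (Real.sinh A.im ^ 2) * h1 + (Real.cos A.re ^ 2 - 1) * h2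

noncomputable def Cz (z : ℂ) : ℝ := (‖z + 1‖ - ‖z - 1‖) / 2

lemma Om_iff (z : ℂ) : Om z ↔ |Cz z| < 1 := by
  unfold Om Cz
  rw [abs_div, abs_of_pos (by norm_num : (0 : ℝ) < 2)]
  constructor <;> intro h <;> linarith

lemma Cz_cos (A : ℂ) : Cz (Complex.cos A) = Real.cos A.re := by
  unfold Cz; rw [norm_cos_add_one, norm_cos_sub_one]; ring

lemma Cz_AA {z : ℂ} (h : Om z) : Real.cos (AA z).re = Cz z := by
  rw [← Cz_cos, cos_AA h]

lemma Cz_lip (z x : ℂ) : |Cz z - Cz x| ≤ ‖z - x‖ := by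
  unfold Cz
  have h1 := abs_norm_sub_norm_le (z + 1) (x + 1)
  have h2 := abs_norm_sub_norm_le (z - 1) (x - 1)
  rw [show z + 1 - (x + 1) = z - x by ring] at h1
  rw [show z - 1 - (x - 1) = z - x by ring] at h2
  rw [abs_le] at *
  constructor <;> linarith [h1.1, h1.2, h2.1, h2.2]

lemma Om_open : IsOpen {z | Om z} := by
  unfold Om
  exact isOpen_lt (by fun_prop) (by fun_prop)

lemma sq_cont {z : ℂ} (h : Om z) : ContinuousAt sS z := by
  unfold sS
  have := Om_slit h
  have h1 : ContinuousAt (fun z : ℂ => Complex.log (1 - z ^ 2)) z := ContinuousAt.clog (by fun_prop) this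
  fun_prop

lemma AA_cont {z : ℂ} (h : Om z) : ContinuousAt AA z := by
  unfold AA
  have := sq_cont h
  have h1 : ContinuousAt (fun z : ℂ => Complex.log (z + Complex.I * sS z)) z := ContinuousAt.clog (by fun_prop) (e_slit h)
  fun_prop

lemma AA_deriv {z : ℂ} (h : Om z) : HasDerivAt AA (-(sS z)⁻¹) z := by
  have h1 := (Complex.hasDerivAt_cos (AA z))
  rw [sin_AA h] at h1
  have := HasDerivAt.of_local_left_inverse (AA_cont h) h1 (neg_ne_zero.2 (sq_ne h)) (by
    filter_upwards [Om_open.mem_nhds h] with y hy using cos_AA hy)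
  rwa [inv_neg] at this

lemma sq_deriv {z : ℂ} (h : Om z) : HasDerivAt sS (-z / sS z) z := by
  have h1 := (Complex.hasDerivAt_sin (AA z)).comp z (AA_deriv h)
  rw [cos_AA h] at h1
  have h2 : HasDerivAt sS (z * -(sS z)⁻¹) z := by
    refine h1.congr_of_eventuallyEq ?_
    filter_upwards [Om_open.mem_nhds h] with y hy using (sin_AA hy).symm
  convert h2 using 1
  ring

lemma Om_real {u : ℝ} (h1 : -1 < u) (h2 : u < 1) : Om (u : ℂ) := by
  unfold Om
  rw [show ((u : ℂ) + 1) = ((u + 1 : ℝ) : ℂ) by push_cast; ring, show ((u : ℂ) - 1) = ((u - 1 : ℝ) : ℂ) by push_cast; ring, Complex.norm_real, Complex.norm_real]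
  simp only [Real.norm_eq_abs]
  rw [abs_of_pos (by linarith : 0 < u + 1), abs_of_neg (by linarith : u - 1 < 0), abs_lt]
  constructor <;> linarith

lemma sq_real {u : ℝ} (h1 : -1 < u) (h2 : u < 1) : sS (u : ℂ) = (Real.sqrt (1 - u ^ 2) : ℝ) := by
  unfold sS
  have h : 0 < 1 - u ^ 2 := by nlinarith
  rw [show (1 - (u : ℂ) ^ 2) = ((1 - u ^ 2 : ℝ) : ℂ) by push_cast; ring, ← Complex.ofReal_log h.le, Real.sqrt_eq_rpow, Real.rpow_def_of_pos h]
  push_cast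
  ring_nf

lemma AA_real {u : ℝ} (h1 : -1 < u) (h2 : u < 1) : AA (u : ℂ) = (Real.arccos u : ℝ) := by
  unfold AA
  rw [sq_real h1 h2]
  have e : (u : ℂ) + Complex.I * ((Real.sqrt (1 - u ^ 2) : ℝ) : ℂ) = Complex.exp ((Real.arccos u : ℝ) * Complex.I) := by
    rw [Complex.exp_mul_I, ← Complex.ofReal_cos, ← Complex.ofReal_sin, Real.cos_arccos h1.le h2.le, Real.sin_arccos]; ring
  rw [e, Complex.log_exp]
  · linear_combination (-(Real.arccos u : ℂ)) * Complex.I_sq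
  · simp; linarith [Real.arccos_nonneg u, Real.pi_pos]
  · simp; exact Real.arccos_le_pi u

lemma norm_sin_sq (A : ℂ) : ‖Complex.sin A‖ ^ 2 = Real.sin A.re ^ 2 + Real.sinh A.im ^ 2 := by
  rw [Complex.sq_norm, Complex.normSq_apply, sin_re_eq, sin_im_eq]
  have h1 := Real.sin_sq_add_cos_sq A.re
  have h2 := Real.cosh_sq A.im
  linear_combination (Real.sinh A.im ^ 2) * h1 + (Real.sin A.re ^ 2) * h2

/-- Lipschitz bound for the square of arccos. -/
lemma AA_sq_lip (σ μ : ℝ) (hσ : 0 < σ) (hμ1 : μ < 1) (hσμ : σ ^ 2 ≤ 1 - μ ^ 2) (x z : ℂ) (hx : ∀ y, ‖y - x‖ ≤ ‖z - x‖ → |Cz y| ≤ μ) :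
    ‖AA z ^ 2 - AA x ^ 2‖ ≤ 2 * (π / σ + 1) * ‖z - x‖ := by
  have hO : ∀ y ∈ Metric.closedBall x ‖z - x‖, Om y := by
    intro y hy
    rw [Om_iff]
    exact lt_of_le_of_lt (hx y (by simpa [dist_eq_norm] using hy)) hμ1
  refine Convex.norm_image_sub_le_of_norm_hasDerivWithin_le (f := fun y => AA y ^ 2) (f' := fun y => 2 * AA y * (-(sS y)⁻¹)) (s := Metric.closedBall x ‖z - x‖) ?_ ?_ (convex_closedBall _ _) (by simp) (by simp [dist_eq_norm])
  · intro y hy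
    have := ((AA_deriv (hO y hy)).fun_pow 2).hasDerivWithinAt (s := Metric.closedBall x ‖z - x‖)
    simpa using this
  · intro y hy
    have hy' := hO y hy
    have hb := hx y (by simpa [dist_eq_norm] using hy)
    rw [← sin_AA hy']
    have h1 := norm_sin_sq (AA y)
    have h2 := Real.sin_sq_add_cos_sq (AA y).re
    have h3 : Real.cos (AA y).re ^ 2 ≤ μ ^ 2 := by
      rw [Cz_AA hy']; exact sq_le_sq' (by linarith [abs_le.1 hb]) (abs_le.1 hb).2
    have h4 : σ ≤ ‖Complex.sin (AA y)‖ := by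
      refine abs_le_of_sq_le_sq' ?_ (norm_nonneg _) |>.2
      nlinarith [sq_nonneg (Real.sinh (AA y).im)]
    have h5 : |(AA y).im| ≤ ‖Complex.sin (AA y)‖ := by
      refine le_trans ?_ (abs_le_of_sq_le_sq (a := Real.sinh (AA y).im) ?_ (norm_nonneg _))
      · rw [Real.abs_sinh]; exact Real.self_le_sinh_iff.2 (abs_nonneg _)
      · nlinarith [sq_nonneg (Real.sin (AA y).re)]
    have h6 : ‖AA y‖ ≤ π + |(AA y).im| := by
      have := Complex.norm_le_abs_re_add_abs_im (AA y)
      have h7 := AA_re hy'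
      rw [abs_of_pos h7.1] at this
      linarith
    have hpos : 0 < ‖Complex.sin (AA y)‖ := lt_of_lt_of_le hσ h4
    rw [norm_mul, norm_mul, norm_neg, norm_inv, ← div_eq_mul_inv, div_le_iff₀ hpos]
    have : π ≤ π / σ * ‖Complex.sin (AA y)‖ := by
      rw [div_mul_eq_mul_div, le_div_iff₀ hσ]
      exact mul_le_mul_of_nonneg_left h4 Real.pi_pos.le
    have n2 : ‖(2 : ℂ)‖ = 2 := by simp
    rw [n2]
    nlinarith

lemma mono_hd {f f' : ℝ → ℝ} {p q : ℝ} (hpq : p ≤ q) (h1 : ∀ s ∈ Set.Icc p q, HasDerivAt f (f' s) s)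
    (h2 : ∀ s ∈ Set.Icc p q, 0 ≤ f' s) : f p ≤ f q := by
  refine monotoneOn_of_deriv_nonneg (convex_Icc p q) (fun s hs => (h1 s hs).continuousAt.continuousWithinAt) (fun s hs => (h1 s (interior_subset hs)).differentiableAt.differentiableWithinAt) (fun s hs => ?_) (Set.left_mem_Icc.2 hpq) (Set.right_mem_Icc.2 hpq) hpq
  rw [(h1 s (interior_subset hs)).deriv]
  exact h2 s (interior_subset hs)

lemma sinh_le_mul_cosh {s : ℝ} (hs : 0 ≤ s) : Real.sinh s ≤ s * Real.cosh s := by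
  have := mono_hd (f := fun s => s * Real.cosh s - Real.sinh s) (f' := fun s => s * Real.sinh s) hs
    (fun x _ => by
      have h := ((hasDerivAt_id x).mul (Real.hasDerivAt_cosh x)).sub (Real.hasDerivAt_sinh x)
      exact HasDerivAt.congr_deriv h (by simp))
    (fun x hx => mul_nonneg hx.1 (Real.sinh_nonneg_iff.2 hx.1))
  simp at this; linarith

lemma tanh_lower {y : ℝ} (hy : 0 ≤ y) : y * Real.cosh y ≤ (1 + y) * Real.sinh y := by
  rw [Real.cosh_eq, Real.sinh_eq]
  have h := Real.add_one_le_exp (2 * y)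
  have e : Real.exp y = Real.exp (2 * y) * Real.exp (-y) := by rw [← Real.exp_add]; ring_nf
  have := Real.exp_pos (-y)
  rw [e]
  nlinarith

lemma step3 {c b y : ℝ} (hc1 : c < 1) (hb : 0 ≤ b) (hy : 0 ≤ y) (h : Real.sinh b ≤ c * Real.sinh y) :
    b ≤ y ∧ (1 - c) * (y ^ 2 / (1 + y)) ≤ y ^ 2 - b ^ 2 := by
  have hsy := Real.sinh_nonneg_iff.2 hy
  have hby : b ≤ y := Real.sinh_le_sinh.1 (by nlinarith)
  refine ⟨hby, ?_⟩
  have h1 := mono_hd (f := fun s => s * Real.cosh y - Real.sinh s) (f' := fun s => Real.cosh y - Real.cosh s) hby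
    (fun x _ => by
      have h := ((hasDerivAt_id x).mul_const (Real.cosh y)).sub (Real.hasDerivAt_sinh x)
      exact HasDerivAt.congr_deriv h (by simp))
    (fun x hx => by
      have : Real.cosh x ≤ Real.cosh y := Real.cosh_le_cosh.2 (by rw [abs_of_nonneg (hb.trans hx.1), abs_of_nonneg hy]; exact hx.2)
      linarith)
  have h1' : b * Real.cosh y - Real.sinh b ≤ y * Real.cosh y - Real.sinh y := h1
  have h2 : (1 - c) * Real.sinh y ≤ (y - b) * Real.cosh y := by nlinarith
  have h3 := tanh_lower hy
  have hcp := Real.cosh_pos y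
  have h4 : (1 - c) * (y / (1 + y)) ≤ y - b := by
    rw [mul_div_assoc', div_le_iff₀ (by linarith)]
    have : (1 - c) * (y * Real.cosh y) ≤ (1 + y) * ((y - b) * Real.cosh y) := by
      calc (1 - c) * (y * Real.cosh y) ≤ (1 - c) * ((1 + y) * Real.sinh y) := mul_le_mul_of_nonneg_left h3 (by linarith)
        _ = (1 + y) * ((1 - c) * Real.sinh y) := by ring
        _ ≤ _ := mul_le_mul_of_nonneg_left h2 (by linarith)
    refine le_of_mul_le_mul_right ?_ hcp
    linarith
  calc (1 - c) * (y ^ 2 / (1 + y)) = y * ((1 - c) * (y / (1 + y))) := by ring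
    _ ≤ y * (y - b) := mul_le_mul_of_nonneg_left h4 hy
    _ ≤ y ^ 2 - b ^ 2 := by nlinarith

lemma logcosh {b y : ℝ} (hb : 0 ≤ b) (hby : b ≤ y) : 2 * (Real.log (Real.cosh y) - Real.log (Real.cosh b)) ≤ y ^ 2 - b ^ 2 := by
  have h1 := mono_hd (f := fun s => s ^ 2 - 2 * Real.log (Real.cosh s)) (f' := fun s => 2 * s - 2 * (Real.sinh s / Real.cosh s)) hby
    (fun x _ => by
      have h := ((hasDerivAt_id x).pow 2).sub (((Real.hasDerivAt_cosh x).log (Real.cosh_pos x).ne').const_mul 2)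
      exact HasDerivAt.congr_deriv h (by simp))
    (fun x hx => by
      have h2 := sinh_le_mul_cosh (hb.trans hx.1)
      have : Real.sinh x / Real.cosh x ≤ x := by rw [div_le_iff₀ (Real.cosh_pos x)]; exact h2
      linarith)
  have h1' : b ^ 2 - 2 * Real.log (Real.cosh b) ≤ y ^ 2 - 2 * Real.log (Real.cosh y) := h1
  linarith

lemma logcos {k θ δ a : ℝ} (hθ : 0 < θ) (hδ : δ < π / 2) (ha : θ ≤ a) (haδ : a ≤ δ) (hk : ∀ s ∈ Set.Icc θ δ, k * s ≤ Real.tan s) :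
    k * (δ ^ 2 - a ^ 2) ≤ 2 * (Real.log (Real.cos a) - Real.log (Real.cos δ)) := by
  have h1 := mono_hd (f := fun s => -2 * Real.log (Real.cos s) - k * s ^ 2) (f' := fun s => -2 * (-Real.sin s / Real.cos s) - k * (2 * s)) haδ
    (fun x hx => by
      have hc : 0 < Real.cos x := Real.cos_pos_of_mem_Ioo ⟨by linarith [hx.1, Real.pi_pos], by linarith [hx.2]⟩
      have h := (((Real.hasDerivAt_cos x).log hc.ne').const_mul (-2)).sub (((hasDerivAt_id x).pow 2).const_mul k)
      exact HasDerivAt.congr_deriv h (by simp))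
    (fun x hx => by
      have := hk x ⟨ha.trans hx.1, hx.2⟩
      rw [Real.tan_eq_sin_div_cos] at this
      rw [neg_div]; linarith)
  have h1' : -2 * Real.log (Real.cos a) - k * a ^ 2 ≤ -2 * Real.log (Real.cos δ) - k * δ ^ 2 := h1
  linarith

lemma D_real {c θ : ℝ} (hc0 : 0 < c) (hc1 : c < 1) (hθ : θ ∈ Set.Ioo 0 π) :
    ∃ κ > 0, ∀ a b y : ℝ, a ∈ Set.Ioo 0 π → 0 ≤ b → 0 ≤ y → Real.cosh b * Real.cos a = c * Real.cos θ * Real.cosh y →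
      Real.sinh b * Real.sin a = c * Real.sin θ * Real.sinh y →
      |Real.cos a| ≤ |Real.cos θ| ∧ Real.arccos (c * Real.cos θ) ^ 2 - y ^ 2 + κ * (y ^ 2 / (1 + y)) ≤ a ^ 2 - b ^ 2 := by
  set δ := Real.arccos (c * Real.cos θ) with hδ
  have hsθ : 0 < Real.sin θ := Real.sin_pos_of_pos_of_lt_pi hθ.1 hθ.2
  have hcδ : Real.cos δ = c * Real.cos θ := Real.cos_arccos (by nlinarith [Real.neg_one_le_cos θ]) (by nlinarith [Real.cos_le_one θ])
  have hδ0 : 0 ≤ δ := Real.arccos_nonneg _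
  have hδπ : δ ≤ π := Real.arccos_le_pi _
  have base : ∀ a b y : ℝ, a ∈ Set.Ioo 0 π → 0 ≤ b → 0 ≤ y → Real.cosh b * Real.cos a = c * Real.cos θ * Real.cosh y →
      Real.sinh b * Real.sin a = c * Real.sin θ * Real.sinh y → |Real.cos a| ≤ |Real.cos θ| ∧ Real.sinh b ≤ c * Real.sinh y := by
    intro a b y ha hb hy h1 h2
    have hsa : 0 < Real.sin a := Real.sin_pos_of_pos_of_lt_pi ha.1 ha.2
    have p1 := Real.sin_sq_add_cos_sq a
    have p2 := Real.sin_sq_add_cos_sq θ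
    have p3 := Real.cosh_sq b
    have p4 := Real.cosh_sq y
    have A : Real.cos a ^ 2 ≤ Real.cos θ ^ 2 := by
      by_contra hcon
      push Not at hcon
      have q1 : Real.cosh b ^ 2 * Real.cos a ^ 2 = c ^ 2 * Real.cosh y ^ 2 * Real.cos θ ^ 2 := by
        linear_combination (Real.cosh b * Real.cos a + c * Real.cos θ * Real.cosh y) * h1
      have q2 : Real.sinh b ^ 2 * Real.sin a ^ 2 = c ^ 2 * Real.sinh y ^ 2 * Real.sin θ ^ 2 := by
        linear_combination (Real.sinh b * Real.sin a + c * Real.sin θ * Real.sinh y) * h2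
      have q3 : Real.cosh b ^ 2 ≤ c ^ 2 * Real.cosh y ^ 2 := by
        have : 0 < Real.cos a ^ 2 := lt_of_le_of_lt (sq_nonneg _) hcon
        refine le_of_mul_le_mul_right ?_ this
        rw [q1]
        exact mul_le_mul_of_nonneg_left hcon.le (by positivity)
      have q4 : c ^ 2 * Real.sinh y ^ 2 ≤ Real.sinh b ^ 2 := by
        have : 0 < Real.sin a ^ 2 := by positivity
        refine le_of_mul_le_mul_right ?_ this
        rw [q2]
        exact mul_le_mul_of_nonneg_left (by linarith) (by positivity)
      nlinarith
    refine ⟨sq_le_sq.1 A, ?_⟩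
    have B : Real.sin θ ≤ Real.sin a := by nlinarith
    have hsy := Real.sinh_nonneg_iff.2 hy
    refine le_of_mul_le_mul_right ?_ hsa
    rw [h2]
    nlinarith [mul_nonneg hc0.le hsy]
  rcases le_or_gt (Real.cos θ) 0 with hcos | hcos
  · refine ⟨1 - c, by linarith, ?_⟩
    intro a b y ha hb hy h1 h2
    obtain ⟨b1, b2⟩ := base a b y ha hb hy h1 h2
    obtain ⟨b3, b4⟩ := step3 hc1 hb hy b2
    refine ⟨b1, ?_⟩
    have hch : Real.cosh b ≤ Real.cosh y := Real.cosh_le_cosh.2 (by rw [abs_of_nonneg hb, abs_of_nonneg hy]; exact b3)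
    have : Real.cos a ≤ Real.cos δ := by
      rw [hcδ]
      refine le_of_mul_le_mul_left ?_ (Real.cosh_pos b)
      rw [h1]
      have : c * Real.cos θ ≤ 0 := mul_nonpos_of_nonneg_of_nonpos hc0.le hcos
      nlinarith
    have haδ : δ ≤ a := by
      by_contra hlt
      push Not at hlt
      have := Real.cos_lt_cos_of_nonneg_of_le_pi ha.1.le hδπ hlt
      linarith
    nlinarith
  · have hδ2 : δ < π / 2 := Real.arccos_lt_pi_div_two.2 (by positivity)
    have hθδ : θ < δ := by
      by_contra hlt
      push Not at hlt
      have := Real.cos_le_cos_of_nonneg_of_le_pi hδ0 hθ.2.le hlt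
      nlinarith
    have hcontf : ContinuousOn (fun s => Real.tan s / s) (Set.Icc θ δ) := by
      refine ContinuousOn.div (Real.continuousOn_tan_Ioo.mono ?_) continuousOn_id ?_
      · intro s hs; exact ⟨by linarith [hs.1, hθ.1, Real.pi_pos], by linarith [hs.2]⟩
      · intro s hs; have := hs.1; have := hθ.1; simp; linarith
    obtain ⟨s0, hs0, hmin⟩ := isCompact_Icc.exists_isMinOn (Set.nonempty_Icc.2 hθδ.le) hcontf
    set k := Real.tan s0 / s0 with hk
    have hs0p : 0 < s0 := lt_of_lt_of_le hθ.1 hs0.1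
    have hk1 : 1 < k := by
      rw [hk, one_lt_div hs0p]
      exact Real.lt_tan hs0p (by linarith [hs0.2])
    have hkk : ∀ s ∈ Set.Icc θ δ, k * s ≤ Real.tan s := by
      intro s hs
      have h := hmin hs
      have hsp : 0 < s := lt_of_lt_of_le hθ.1 hs.1
      have h' : k ≤ Real.tan s / s := h
      rwa [le_div_iff₀ hsp] at h'
    refine ⟨(1 - 1 / k) * (1 - c), mul_pos (by have : 1 / k < 1 := by rw [div_lt_one (by linarith)]; exact hk1
                                               linarith) (by linarith), ?_⟩
    intro a b y ha hb hy h1 h2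
    obtain ⟨b1, b2⟩ := base a b y ha hb hy h1 h2
    obtain ⟨b3, b4⟩ := step3 hc1 hb hy b2
    refine ⟨b1, ?_⟩
    have hch : Real.cosh b ≤ Real.cosh y := Real.cosh_le_cosh.2 (by rw [abs_of_nonneg hb, abs_of_nonneg hy]; exact b3)
    have hcbp := Real.cosh_pos b
    have hcyp := Real.cosh_pos y
    have hcpos : 0 < c * Real.cos θ := by positivity
    have hcap : 0 < Real.cos a := by
      have : 0 < Real.cosh b * Real.cos a := by rw [h1]; positivity
      exact pos_of_mul_pos_right this hcbp.le
    have haδ : a ≤ δ := by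
      by_contra hlt
      push Not at hlt
      have h3 := Real.cos_lt_cos_of_nonneg_of_le_pi hδ0 ha.2.le hlt
      rw [hcδ] at h3
      nlinarith
    have hθa : θ ≤ a := by
      by_contra hlt
      push Not at hlt
      have h3 := Real.cos_lt_cos_of_nonneg_of_le_pi ha.1.le hθ.2.le hlt
      rw [abs_of_pos hcap, abs_of_pos hcos] at b1
      linarith
    have l1 := logcosh hb b3
    have l2 := logcos hθ.1 hδ2 hθa haδ hkk
    have l3 : Real.log (Real.cosh b) + Real.log (Real.cos a) = Real.log (Real.cos δ) + Real.log (Real.cosh y) := by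
      rw [← Real.log_mul hcbp.ne' hcap.ne', h1, hcδ, Real.log_mul hcpos.ne' hcyp.ne']
    have l4 : k * (δ ^ 2 - a ^ 2) ≤ y ^ 2 - b ^ 2 := by linarith
    have l5 : δ ^ 2 - a ^ 2 ≤ 1 / k * (y ^ 2 - b ^ 2) := by
      rw [one_div_mul_eq_div, le_div_iff₀ (by linarith)]; linarith
    have l6 : (1 - 1 / k) * ((1 - c) * (y ^ 2 / (1 + y))) ≤ (1 - 1 / k) * (y ^ 2 - b ^ 2) :=
      mul_le_mul_of_nonneg_left b4 (by have : 1 / k < 1 := by rw [div_lt_one (by linarith)]; exact hk1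
                                       linarith)
    linarith

lemma D_key {c θ : ℝ} (hc0 : 0 < c) (hc1 : c < 1) (hθ : θ ∈ Set.Ioo 0 π) :
    ∃ κ > 0, ∀ y : ℝ, |Cz (c * Complex.cos (θ + Complex.I * y))| ≤ |Real.cos θ| ∧
      Real.arccos (c * Real.cos θ) ^ 2 - y ^ 2 + κ * (y ^ 2 / (1 + |y|)) ≤ (AA (c * Complex.cos (θ + Complex.I * y)) ^ 2).re := by
  obtain ⟨κ, hκ, H⟩ := D_real hc0 hc1 hθ
  refine ⟨κ, hκ, fun y => ?_⟩
  have hsθ : 0 < Real.sin θ := Real.sin_pos_of_pos_of_lt_pi hθ.1 hθ.2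
  set x := (c : ℂ) * Complex.cos (θ + Complex.I * y) with hx
  have hre : x.re = c * (Real.cos θ * Real.cosh y) := by rw [hx, Complex.re_ofReal_mul, cos_re_eq]; simp
  have him : x.im = -(c * (Real.sin θ * Real.sinh y)) := by rw [hx, Complex.im_ofReal_mul, cos_im_eq]; simp
  have hO : Om x := by
    by_cases hy : y = 0
    · have : x = ((c * Real.cos θ : ℝ) : ℂ) := Complex.ext (by rw [hre, hy, Real.cosh_zero, mul_one, Complex.ofReal_re]) (by rw [him, hy, Real.sinh_zero, Complex.ofReal_im]; ring)
      rw [this]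
      refine Om_real (by nlinarith [Real.neg_one_le_cos θ]) (by nlinarith [Real.cos_le_one θ])
    · have hi : x.im ≠ 0 := by
        rw [him]
        have : Real.sinh y ≠ 0 := by simpa using hy
        exact neg_ne_zero.2 (mul_ne_zero hc0.ne' (mul_ne_zero hsθ.ne' this))
      unfold Om
      have hd : ‖(x + 1) - (x - 1)‖ = 2 := by rw [show (x + 1) - (x - 1) = 2 by ring]; simp
      have n1 : ‖x + 1‖ ^ 2 = (x.re + 1) ^ 2 + x.im ^ 2 := by rw [Complex.sq_norm, Complex.normSq_apply]; simp; ring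
      have n2 : ‖x - 1‖ ^ 2 = (x.re - 1) ^ 2 + x.im ^ 2 := by rw [Complex.sq_norm, Complex.normSq_apply]; simp; ring
      have p1 := norm_nonneg (x + 1)
      have p2 := norm_nonneg (x - 1)
      have hi2 : 0 < x.im ^ 2 := by positivity
      by_contra hcon
      push Not at hcon
      have h4 : 4 ≤ (‖x + 1‖ - ‖x - 1‖) ^ 2 := by rw [← sq_abs]; nlinarith
      have h5 : ‖x + 1‖ * ‖x - 1‖ ≤ x.re ^ 2 + x.im ^ 2 - 1 := by nlinarith
      have h6 : (‖x + 1‖ * ‖x - 1‖) ^ 2 = ((x.re + 1) ^ 2 + x.im ^ 2) * ((x.re - 1) ^ 2 + x.im ^ 2) := by rw [mul_pow, n1, n2]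
      have h7 : (‖x + 1‖ * ‖x - 1‖) ^ 2 ≤ (x.re ^ 2 + x.im ^ 2 - 1) ^ 2 := pow_le_pow_left₀ (by positivity) h5 2
      nlinarith
  have hA := AA_re hO
  have hcA := cos_AA hO
  have e1 : Real.cos (AA x).re * Real.cosh (AA x).im = c * (Real.cos θ * Real.cosh y) := by rw [← cos_re_eq, hcA, hre]
  have e2 : Real.sin (AA x).re * Real.sinh (AA x).im = c * (Real.sin θ * Real.sinh y) := by
    have := cos_im_eq (AA x); rw [hcA, him] at this; linarith
  have hsA : 0 < Real.sin (AA x).re := Real.sin_pos_of_pos_of_lt_pi hA.1 hA.2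
  have := H (AA x).re |(AA x).im| |y| hA (abs_nonneg _) (abs_nonneg _) (by rw [Real.cosh_abs, Real.cosh_abs]; linarith) (by
    rw [← Real.abs_sinh, ← Real.abs_sinh]
    have h := congrArg abs e2
    rw [abs_mul, abs_mul, abs_mul, abs_of_pos hsA, abs_of_pos hc0, abs_of_pos hsθ] at h
    linarith)
  rw [Cz_AA hO] at this
  refine ⟨this.1, ?_⟩
  have h := this.2
  rw [sq_abs, sq_abs] at h
  have e : (AA x ^ 2).re = (AA x).re ^ 2 - (AA x).im ^ 2 := by rw [pow_two, Complex.mul_re]; ring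
  rw [e]; exact h

lemma HasSum.congr_fun' {f g : ℕ → ℝ} {a : ℝ} (h : HasSum f a) (e : ∀ l, g l = f l) : HasSum g a := by
  rw [show g = f from funext e]; exact h

lemma regroup {f : ℕ × ℕ → ℝ} {a : ℝ} (h : HasSum f a) :
    HasSum (fun l => ∑ k ∈ Finset.range (l/2+1), f (l - 2*k, k)) a := by
  have := h.tsum_fiberwise (fun mk : ℕ × ℕ => mk.1 + 2 * mk.2)
  refine HasSum.congr_fun' this (fun l => ?_)
  have e : (fun mk : ℕ × ℕ => mk.1 + 2 * mk.2) ⁻¹' {l} = ((Finset.range (l/2+1)).image (fun k => (l - 2*k, k)) : Finset (ℕ × ℕ)) := by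
    ext ⟨m, k⟩
    simp only [Set.mem_preimage, Set.mem_singleton_iff, Finset.coe_image, Set.mem_image, Finset.mem_coe, Finset.mem_range, Prod.mk.injEq]
    constructor
    · intro h
      exact ⟨k, by omega, by omega, rfl⟩
    · rintro ⟨k', h1, h2, h3⟩
      omega
  rw [e, Finset.tsum_subtype' _ f, Finset.sum_image]
  intro x _ y _ hxy
  exact (Prod.mk.inj hxy).2

lemma summable_pe (q : ℕ) {a : ℝ} (ha : 0 < a) : Summable fun k : ℕ => ((k:ℝ) + 1) ^ q * Real.exp (-a * k) := by
  have h := (summable_nat_add_iff 1).2 (Real.summable_pow_mul_exp_neg_nat_mul q ha)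
  refine (h.mul_left (Real.exp a)).congr (fun k => ?_)
  push_cast
  rw [mul_left_comm, ← Real.exp_add]
  congr 2; ring

lemma jQ_bound (n m k : ℕ) (hn : 1 ≤ n) (z : ℝ) (hz0 : 0 ≤ z) (hz1 : z ≤ 1) :
    |jQ k (2*n-1) (m+1) z| ≤ (k+1) * (2*k+m+2*n+1 : ℝ) ^ (2*k) := by
  set N : ℕ := 2*k+m+2*n+1 with hN
  have hNr : (2*k+m+2*n+1 : ℝ) = (N:ℝ) := by rw [hN]; push_cast; ring
  rw [hNr]
  unfold jQ
  refine (Finset.abs_sum_le_sum_abs _ _).trans ?_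
  have : ∀ s ∈ Finset.range (k+1), |jq k (2*n-1) (m+1) s * z ^ s| ≤ (N:ℝ) ^ (2*k) := by
    intro s hs
    have hs' : s ≤ k := by simpa [Nat.lt_succ_iff] using hs
    unfold jq
    rw [abs_mul, abs_mul, abs_mul, abs_pow, abs_neg, abs_one, one_pow, one_mul, Nat.abs_cast, Nat.abs_cast, abs_of_nonneg (pow_nonneg hz0 s)]
    have h1 : (k + (m+1)).choose (m+1+s) ≤ N ^ k := by
      rw [Nat.choose_symm_of_eq_add (show k + (m+1) = (m+1+s) + (k - s) by omega)]
      refine (Nat.choose_le_pow _ _).trans ((Nat.pow_le_pow_left (by omega) _).trans (Nat.pow_le_pow_right (by omega) (by omega)))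
    have h2 : (k + (2*n-1) + (m+1) + s).choose s ≤ N ^ k := by
      refine (Nat.choose_le_pow _ _).trans ((Nat.pow_le_pow_left (by omega) _).trans (Nat.pow_le_pow_right (by omega) (by omega)))
    have h1' : ((k + (m+1)).choose (m+1+s) : ℝ) ≤ (N:ℝ) ^ k := by exact_mod_cast h1
    have h2' : ((k + (2*n-1) + (m+1) + s).choose s : ℝ) ≤ (N:ℝ) ^ k := by exact_mod_cast h2
    have h3 : z ^ s ≤ 1 := pow_le_one₀ hz0 hz1
    calc _ ≤ (N:ℝ)^k * (N:ℝ)^k * 1 := by gcongr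
      _ = _ := by rw [mul_one, ← pow_add]; congr 1; ring
  refine (Finset.sum_le_sum this).trans ?_
  simp

lemma aC_bound (n m k : ℕ) (hn : 1 ≤ n) (c : ℝ) (hz0 : 0 ≤ c) (hz1 : c ≤ 1) :
    |(2*k+m+2*n+1 : ℝ) * aC n m k c| ≤ (2*k+m+2*n+1 : ℝ) ^ (2*n+2) * (2*k+m+2*n+1 : ℝ) ^ (2*k) := by
  have hj := jQ_bound n m k hn (c^2) (by positivity) (pow_le_one₀ hz0 hz1)
  set N : ℕ := 2*k+m+2*n+1 with hN
  have hNr : (2*k+m+2*n+1 : ℝ) = (N:ℝ) := by rw [hN]; push_cast; ring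
  rw [hNr] at hj ⊢
  unfold aC
  rw [abs_mul, abs_mul, abs_mul, abs_mul, Nat.abs_cast, Nat.abs_cast, abs_of_nonneg (pow_nonneg hz0 m), abs_of_nonneg (by positivity : (0:ℝ) ≤ m + 1)]
  have h2 : (k + m + 2 * n).choose (2*n-1) ≤ N ^ (2*n-1) := 
      (Nat.choose_le_pow _ _).trans (Nat.pow_le_pow_left (by omega) _)
  have h2' : ((k + m + 2 * n).choose (2*n-1) : ℝ) ≤ (N:ℝ) ^ (2*n-1) := by exact_mod_cast h2
  have h3 : c ^ m ≤ 1 := pow_le_one₀ hz0 hz1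
  have h4 : (m + 1 : ℝ) ≤ N := by rw [hN]; push_cast; nlinarith [Nat.cast_nonneg (α := ℝ) n, Nat.cast_nonneg (α := ℝ) k]
  have h5 : (k + 1 : ℝ) ≤ N := by rw [hN]; push_cast; nlinarith [Nat.cast_nonneg (α := ℝ) n, Nat.cast_nonneg (α := ℝ) k, Nat.cast_nonneg (α := ℝ) m]
  calc _ ≤ (N:ℝ) * (N * N ^ (2*n-1) * 1 * (N * N ^ (2*k))) := by
        gcongr
        exact hj.trans (by gcongr)
    _ = (N:ℝ) ^ (1 + 1 + (2*n-1) + 1) * N ^ (2*k) := by ring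
    _ = _ := by congr 2; omega

/-- real term -/
noncomputable def rT (n : ℕ) (c t η : ℝ) (mk : ℕ × ℕ) : ℝ :=
  (2*mk.2+mk.1+2*n+1 : ℝ) * aC n mk.1 mk.2 c * Real.exp (-(4 * ((mk.2 : ℝ) * (mk.2 + 2 * n + mk.1 + 1) + n * mk.1)) * t) * Real.sin ((mk.1+1)*η)

lemma rT_summable (n : ℕ) (hn : 1 ≤ n) (c t η : ℝ) (hz0 : 0 ≤ c) (hz1 : c ≤ 1) (ht : 0 < t) : Summable (rT n c t η) := by
  set C : ℝ := 2 / t^2 with hC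
  have hCp : 0 < C := by positivity
  set L := Real.log C with hL
  set q := 2*n+2
  set B := (L+1)^2/(8*t) with hB
  have hn1 : (1:ℝ) ≤ n := by exact_mod_cast hn
  have hnt : 0 < 4*n*t := by positivity
  have hs1 : Summable fun m : ℕ => ((m:ℝ) + 1) ^ q * Real.exp (-(4*n*t) * m) := summable_pe q hnt
  have hs2 : Summable fun m : ℕ => ((m:ℝ) + 1) ^ q * Real.exp (-1 * m) := summable_pe q one_pos
  have hs := (Summable.mul_of_nonneg hs1 hs2 (fun m => by positivity) (fun m => by positivity)).mul_left ((2*n+3)^q * Real.exp B)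
  refine Summable.of_norm_bounded hs ?_
  rintro ⟨m, k⟩
  simp only [rT, Real.norm_eq_abs]
  rw [abs_mul, abs_mul, abs_of_pos (Real.exp_pos _)]
  have hb := aC_bound n m k hn c hz0 hz1
  set N : ℝ := (2*k+m+2*n+1 : ℝ) with hN
  have hn0 : (0:ℝ) ≤ n := by positivity
  have hm0 : (0:ℝ) ≤ m := by positivity
  have hk0 : (0:ℝ) ≤ k := by positivity
  have hNp : 0 < N := by positivity
  have hN2 : N ≤ (2*n+3)*((m+1)*(k+1)) := by
    rw [hN]; nlinarith [mul_nonneg hm0 hk0, mul_nonneg hn0 hk0, mul_nonneg hn0 hm0, mul_nonneg hn0 (mul_nonneg hm0 hk0)]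
  have he : Real.exp (-(4 * ((k : ℝ) * (k + 2 * n + m + 1) + n * m)) * t) ≤ Real.exp (-(t*N)) ^ k * Real.exp (-(2*t*k^2)) * Real.exp (-(4*n*t) * m) := by
    rw [← Real.exp_nat_mul, ← Real.exp_add, ← Real.exp_add]
    apply Real.exp_le_exp.2
    have : (k:ℝ) * (t * N) + 2*t*k^2 ≤ 4 * (k * (k + 2 * n + m + 1)) * t := by
      rw [hN]; nlinarith [mul_nonneg (mul_nonneg hk0 ht.le) hm0, mul_nonneg (mul_nonneg hk0 ht.le) hn0, mul_nonneg hk0 ht.le]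
    nlinarith
  have hc1 : N^2 * Real.exp (-(t*N)) ≤ C := by
    have := Real.pow_div_factorial_le_exp (t*N) (by positivity) 2
    rw [Real.exp_neg, ← div_eq_mul_inv, div_le_iff₀ (Real.exp_pos _)]
    simp [Nat.factorial] at this
    rw [hC, div_mul_eq_mul_div, le_div_iff₀ (by positivity)]
    nlinarith
  have hc2 : C^k * Real.exp (-(2*t*k^2)) ≤ Real.exp B * Real.exp (-1 * k) := by
    have : C = Real.exp L := (Real.exp_log hCp).symm
    rw [this, ← Real.exp_nat_mul, ← Real.exp_add, ← Real.exp_add]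
    apply Real.exp_le_exp.2
    have : B * (8*t) = (L+1)^2 := by rw [hB]; field_simp
    have h8 : 0 < 8*t := by positivity
    refine le_of_mul_le_mul_right ?_ h8
    nlinarith [sq_nonneg (4*t*k - (L+1))]
  calc _ ≤ (N ^ q * N ^ (2*k)) * (Real.exp (-(t*N)) ^ k * Real.exp (-(2*t*k^2)) * Real.exp (-(4*n*t) * m)) * 1 := by
        gcongr
        exact Real.abs_sin_le_one _
    _ = N ^ q * ((N^2 * Real.exp (-(t*N))) ^ k * Real.exp (-(2*t*k^2))) * Real.exp (-(4*n*t) * m) := by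
        rw [mul_pow, ← pow_mul]; ring
    _ ≤ ((2*n+3)*((m+1)*(k+1))) ^ q * (C^k * Real.exp (-(2*t*k^2))) * Real.exp (-(4*n*t) * m) := by
        gcongr
    _ ≤ ((2*n+3)*((m+1)*(k+1))) ^ q * (Real.exp B * Real.exp (-1 * k)) * Real.exp (-(4*n*t) * m) := by
        gcongr
    _ = _ := by rw [mul_pow, mul_pow]; ring

lemma pKernel_hasSum (n : ℕ) (hn : 1 ≤ n) (J : ℕ → ℕ → ℕ → ℝ → ℝ) (hJ : IsJacobi J) (r η t : ℝ)
    (hr : r ∈ Set.Ioo 0 (π/2)) (hη : η ∈ Set.Ioo 0 π) (ht : 0 < t) :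
    HasSum (fun l : ℕ => (Nat.factorial (2*n-1) / (2*π^(2*n+2)) / Real.sin η) * ((l+2*n+1 : ℝ) * ∑ k ∈ Finset.range (l/2+1),
      aC n (l-2*k) k (Real.cos r) * (Real.exp (-t * (l+2*n+1)^2) * Real.exp (4*n*(n+1)*t) * Real.exp (t * ((l-2*k : ℕ)+1)^2)) * Real.sin ((((l-2*k:ℕ):ℝ)+1)*η))) (pKernel n J t r η) := by
  have hsum := rT_summable n hn (Real.cos r) t η (Real.cos_nonneg_of_mem_Icc ⟨by linarith [hr.1, Real.pi_pos], hr.2.le⟩) (Real.cos_le_one _) ht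
  have e : pTerm n J t r η = fun mk => (Nat.factorial (2*n-1) / (2*π^(2*n+2)) / Real.sin η) * rT n (Real.cos r) t η mk := by
    funext ⟨m, k⟩
    have hG : Real.Gamma (2 * n) = Nat.factorial (2*n-1) := by
      rw [← Real.Gamma_nat_eq_factorial]; congr 1; rw [Nat.cast_sub (by omega)]; push_cast; ring
    simp only [pTerm, rT, vertFactor, if_neg hη.1.ne', jac_eval J hJ k _ _ r hr, hG, aC]
    ring
  have hs2 : Summable (pTerm n J t r η) := by rw [e]; exact hsum.mul_left _
  have := regroup (hs2.hasSum)
  unfold pKernel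
  convert this using 2 with l
  rw [e, ← Finset.mul_sum, Finset.mul_sum (a := ((l:ℝ)+2*n+1))]
  congr 1
  refine Finset.sum_congr rfl (fun k hk => ?_)
  have hk' : 2 * k ≤ l := by have := Finset.mem_range.1 hk; omega
  simp only [rT]
  rw [← Real.exp_add, ← Real.exp_add, Nat.cast_sub hk']
  push_cast
  have : -(4 * ((k:ℝ) * (k + 2 * n + (l - 2 * k) + 1) + n * (l - 2 * k))) * t = -t * (l + 2 * n + 1) ^ 2 + 4 * n * (n + 1) * t + t * ((l - 2 * k) + 1) ^ 2 := by ring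
  rw [this]
  ring

lemma circ_int (F : ℕ → ℂ → ℂ) (hF : ∀ j z, HasDerivAt (F j) (F (j+1) z) z) (ρ : ℝ) (x : ℂ) (d : ℕ) : ∀ j,
    ∫ ψ in (0:ℝ)..(2*π), F j (x + ρ * Complex.exp (ψ * Complex.I)) * Complex.exp (-(d * (ψ * Complex.I))) =
      2 * π * ρ ^ d / d.factorial * F (j+d) x := by
  have hc : ∀ j, Continuous (F j) := fun j => continuous_iff_continuousAt.2 (fun z => (hF j z).continuousAt)
  induction d with
  | zero =>
    intro j
    have h := (DiffContOnCl.circleAverage (f := F j) (c := x) (R := ρ) (Differentiable.diffContOnCl (fun z => (hF j z).differentiableAt)))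
    rw [circleAverage_def] at h
    simp only [circleMap] at h
    have hp : (2*π : ℝ) ≠ 0 := by positivity
    rw [inv_smul_eq_iff₀ hp] at h
    simp [h]
  | succ d ih =>
    intro j
    have hd : ∀ ψ : ℝ, HasDerivAt (fun ψ : ℝ => F j (x + ρ * Complex.exp (ψ * Complex.I)) * Complex.exp (-((d+1:ℕ) * (ψ * Complex.I))))
        (Complex.I * ρ * (F (j+1) (x + ρ * Complex.exp (ψ * Complex.I)) * Complex.exp (-(d * (ψ * Complex.I)))) - 
          Complex.I * (d+1:ℕ) * (F j (x + ρ * Complex.exp (ψ * Complex.I)) * Complex.exp (-((d+1:ℕ) * (ψ * Complex.I))))) ψ := by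
      intro ψ
      have h0 : HasDerivAt (fun ψ : ℝ => (ψ : ℂ) * Complex.I) (1 * Complex.I) ψ := (Complex.ofRealCLM.hasDerivAt (x := ψ)).mul_const Complex.I
      have h1 : HasDerivAt (fun ψ : ℝ => x + ρ * Complex.exp (ψ * Complex.I)) _ ψ := (h0.cexp.const_mul (ρ:ℂ)).const_add x
      have h2 : HasDerivAt (fun ψ : ℝ => Complex.exp (-((d+1:ℕ) * (ψ * Complex.I)))) _ ψ := ((h0.const_mul ((d+1:ℕ):ℂ)).neg).cexp
      have h3 : HasDerivAt (fun ψ : ℝ => F j (x + ρ * Complex.exp (ψ * Complex.I))) _ ψ := (hF j _).comp ψ h1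
      have h4 := h3.mul h2
      refine h4.congr_deriv ?_
      have e : Complex.exp (-(d * (ψ * Complex.I))) = Complex.exp (ψ * Complex.I) * Complex.exp (-((d+1:ℕ) * (ψ * Complex.I))) := by
        rw [← Complex.exp_add]; congr 1; push_cast; ring
      rw [e]; simp only [Pi.neg_apply]; ring
    have c1 : Continuous fun ψ : ℝ => (F (j+1) (x + ρ * Complex.exp (ψ * Complex.I)) * Complex.exp (-(d * (ψ * Complex.I)))) := by
      have := hc (j+1); fun_prop
    have c2 : Continuous fun ψ : ℝ => (F j (x + ρ * Complex.exp (ψ * Complex.I)) * Complex.exp (-((d+1:ℕ) * (ψ * Complex.I)))) := by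
      have := hc j; fun_prop
    have h := intervalIntegral.integral_eq_sub_of_hasDerivAt (a := 0) (b := 2*π) (fun ψ _ => hd ψ) ((by fun_prop : Continuous _).intervalIntegrable _ _)
    have e1 : Complex.exp (((2*π:ℝ):ℂ) * Complex.I) = 1 := by push_cast; exact Complex.exp_two_pi_mul_I
    have e2 : Complex.exp (-((d+1:ℕ) * (((2*π:ℝ):ℂ) * Complex.I))) = 1 := by
      rw [Complex.exp_neg, Complex.exp_nat_mul, e1]; simp
    rw [e1, e2, intervalIntegral.integral_sub ((c1.const_mul _).intervalIntegrable _ _) ((c2.const_mul _).intervalIntegrable _ _), intervalIntegral.integral_const_mul, intervalIntegral.integral_const_mul, ih (j+1)] at h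
    simp only [Complex.ofReal_zero, zero_mul, mul_zero, neg_zero, Complex.exp_zero, mul_one, sub_self] at h
    set Y := ∫ ψ in (0:ℝ)..(2*π), F j (x + ρ * Complex.exp (ψ * Complex.I)) * Complex.exp (-((d+1:ℕ) * (ψ * Complex.I)))
    have hf : (d.factorial : ℂ) ≠ 0 := by exact_mod_cast d.factorial_ne_zero
    have hd1 : ((d+1:ℕ) : ℂ) ≠ 0 := by exact_mod_cast Nat.succ_ne_zero d
    rw [show j + 1 + d = j + (d+1) by ring] at h
    have h' : ((d+1:ℕ):ℂ) * Y = ρ * (2 * π * ρ ^ d / d.factorial * F (j+(d+1)) x) := by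
      have hI := Complex.I_ne_zero
      apply mul_left_cancel₀ hI
      linear_combination -h
    rw [Nat.factorial_succ, Nat.cast_mul]
    apply mul_left_cancel₀ hd1
    rw [h']
    field_simp
    ring

lemma circ_exp (κ : ℝ) (d : ℕ) : ∫ ψ in (0:ℝ)..(2*π), Complex.exp (κ * Complex.exp (ψ * Complex.I)) * Complex.exp (-(d * (ψ * Complex.I))) = 2 * π * κ ^ d / d.factorial := by
  have := circ_int (fun _ => Complex.exp) (fun _ z => Complex.hasDerivAt_exp z) κ 0 d 0
  simpa using this

lemma circ_poly (p : Polynomial ℂ) (ρ : ℝ) (x : ℂ) (d : ℕ) : 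
    ∫ ψ in (0:ℝ)..(2*π), p.eval (x + ρ * Complex.exp (ψ * Complex.I)) * Complex.exp (-(d * (ψ * Complex.I))) =
      2 * π * ρ ^ d / d.factorial * (Polynomial.derivative^[d] p).eval x := by
  have := circ_int (fun j z => (Polynomial.derivative^[j] p).eval z) (fun j z => by
    have := (Polynomial.derivative^[j] p).hasDerivAt z
    rwa [← Function.iterate_succ_apply' Polynomial.derivative j p] at this) ρ x d 0
  simpa using this

lemma gauss_int (t θ η M : ℝ) (ht : 0 < t) :
    ∫ v : ℝ, Complex.exp (((θ:ℂ) - η + Complex.I * (√t * v))^2 / (4*t)) * Complex.sin (M * (θ + Complex.I * (√t * v))) = 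
      ((4*π : ℝ) : ℂ) ^ (1/2 : ℂ) * (Complex.exp (t * M^2) * Complex.sin (M * η)) ∧
    Integrable (fun v : ℝ => Complex.exp (((θ:ℂ) - η + Complex.I * (√t * v))^2 / (4*t)) * Complex.sin (M * (θ + Complex.I * (√t * v)))) := by
  have hs : (√t : ℂ)^2 = t := by exact_mod_cast Real.sq_sqrt ht.le
  have ht' : (t:ℂ) ≠ 0 := by exact_mod_cast ht.ne'
  have hI := Complex.I_sq
  set a : ℂ := θ - η with ha
  set b : ℂ := -(1/4) with hb
  have hbr : b.re < 0 := by rw [hb]; norm_num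
  set c1 : ℂ := Complex.I * a * √t / (2*t) + M * √t
  set c2 : ℂ := Complex.I * a * √t / (2*t) - M * √t
  set d1 : ℂ := a^2/(4*t) - Complex.I * M * θ
  set d2 : ℂ := a^2/(4*t) + Complex.I * M * θ
  have e : (fun v : ℝ => Complex.exp ((a + Complex.I * (√t * v))^2 / (4*t)) * Complex.sin (M * (θ + Complex.I * (√t * v)))) = 
     fun v : ℝ => (Complex.I/2) * Complex.exp (b * v^2 + c1 * v + d1) - (Complex.I/2) * Complex.exp (b * v^2 + c2 * v + d2) := by
    funext v
    rw [Complex.sin]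
    have q0 : (a + Complex.I * (√t * v))^2 / (4*t) = b * v^2 + Complex.I * a * √t / (2*t) * v + a^2/(4*t) := by
      rw [hb]; field_simp; linear_combination (2*v^2*(√t:ℂ)^2)*hI - 2 * v^2 * hs
    have q1 : Complex.exp (b * v^2 + c1 * v + d1) = Complex.exp ((a + Complex.I * (√t * v))^2 / (4*t)) * Complex.exp (-(M * (θ + Complex.I * (√t * v))) * Complex.I) := by
      rw [← Complex.exp_add, q0]; congr 1; simp only [c1, d1]; linear_combination (M*√t*v)*hI
    have q2 : Complex.exp (b * v^2 + c2 * v + d2) = Complex.exp ((a + Complex.I * (√t * v))^2 / (4*t)) * Complex.exp (M * (θ + Complex.I * (√t * v)) * Complex.I) := by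
      rw [← Complex.exp_add, q0]; congr 1; simp only [c2, d2]; linear_combination -(M*√t*v)*hI
    rw [q1, q2]; ring
  have i1 := (integrable_cexp_quadratic' hbr c1 d1).const_mul (Complex.I/2)
  have i2 := (integrable_cexp_quadratic' hbr c2 d2).const_mul (Complex.I/2)
  rw [e]
  refine ⟨?_, i1.sub i2⟩
  rw [integral_sub i1 i2, integral_const_mul, integral_const_mul, integral_cexp_quadratic hbr, integral_cexp_quadratic hbr]
  have hb4 : (π:ℂ) / -b = ((4*π:ℝ):ℂ) := by rw [hb]; push_cast; ring
  rw [hb4, Complex.sin]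
  have q1 : Complex.exp (d1 - c1^2/(4*b)) = Complex.exp (t*M^2) * Complex.exp (-(M*η)*Complex.I) := by
    rw [← Complex.exp_add]; congr 1; simp only [c1, d1, hb, ha]
    field_simp; ring_nf; rw [hI]; simp only [← hs]; ring
  have q2 : Complex.exp (d2 - c2^2/(4*b)) = Complex.exp (t*M^2) * Complex.exp ((M*η)*Complex.I) := by
    rw [← Complex.exp_add]; congr 1; simp only [c2, d2, hb, ha]
    field_simp; ring_nf; rw [hI]; simp only [← hs]; ring
  rw [q1, q2]; ring

lemma summable_int_exp {a : ℝ} (ha : 0 < a) : Summable fun k : ℤ => Real.exp (-a * |(k:ℝ)|) := by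
  have h : Summable fun k : ℕ => Real.exp (-a * k) := by
    have := Real.summable_pow_mul_exp_neg_nat_mul 0 ha
    simpa using this
  refine Summable.of_nat_of_neg ?_ ?_
  · simpa using h
  · simpa using h

lemma int_abs_le_sq (M : ℤ) : |(M:ℝ)| ≤ (M:ℝ)^2 := by
  have h : |M| ≤ M^2 := by
    rw [← sq_abs, sq]
    rcases eq_or_ne M 0 with h | h
    · simp [h]
    · have := Int.one_le_abs h; nlinarith
  exact_mod_cast h

lemma gauss_sum {t : ℝ} (ht : 0 < t) : ∃ C1 : ℝ, ∀ (β : ℝ) (s : Finset ℤ), ∑ N ∈ s, Real.exp (-t * ((N:ℝ) - β)^2) ≤ C1 := by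
  have hS := summable_int_exp (half_pos ht)
  refine ⟨Real.exp t * ∑' M : ℤ, Real.exp (-(t/2) * |(M:ℝ)|), fun β s => ?_⟩
  have hS2 : Summable fun N : ℤ => Real.exp (-(t/2) * |((N - ⌊β⌋ : ℤ):ℝ)|) := (Equiv.subRight ⌊β⌋).summable_iff.2 hS
  have e : ∑' N : ℤ, Real.exp (-(t/2) * |((N - ⌊β⌋ : ℤ):ℝ)|) = ∑' M : ℤ, Real.exp (-(t/2) * |(M:ℝ)|) :=
    (Equiv.subRight ⌊β⌋).tsum_eq (fun M : ℤ => Real.exp (-(t/2) * |(M:ℝ)|))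
  rw [← e]
  calc _ ≤ ∑ N ∈ s, Real.exp t * Real.exp (-(t/2) * |((N - ⌊β⌋ : ℤ):ℝ)|) := by
        refine Finset.sum_le_sum (fun N _ => ?_)
        rw [← Real.exp_add]
        apply Real.exp_le_exp.2
        have h1 := int_abs_le_sq (N - ⌊β⌋)
        have h2 := Int.floor_le β
        have h3 := Int.lt_floor_add_one β
        push_cast at h1 ⊢
        set f := (⌊β⌋ : ℝ)
        set M := (N:ℝ) - f
        have h4 : ((N:ℝ) - β)^2 ≥ M^2/2 - 1 := by
          have : (N:ℝ) - β = M - (β - f) := by simp only [M]; ring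
          rw [this]; nlinarith [sq_nonneg (M - 2 * (β - f))]
        nlinarith
    _ = Real.exp t * ∑ N ∈ s, Real.exp (-(t/2) * |((N - ⌊β⌋ : ℤ):ℝ)|) := by rw [Finset.mul_sum]
    _ ≤ _ := by
        gcongr
        exact hS2.sum_le_tsum s (fun _ _ => by positivity)

lemma norm_cos_int (N : ℤ) (A : ℂ) : ‖Complex.cos (N * A)‖ ≤ Real.exp (N * A.im) + Real.exp (N * (-A.im)) := by
  rw [Complex.cos, norm_div]
  have h := norm_add_le (Complex.exp (N * A * Complex.I)) (Complex.exp (-(N*A) * Complex.I))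
  have e1 : ‖Complex.exp (N * A * Complex.I)‖ = Real.exp (N * (-A.im)) := by rw [Complex.norm_exp]; congr 1; simp
  have e2 : ‖Complex.exp (-(N * A) * Complex.I)‖ = Real.exp (N * (A.im)) := by rw [Complex.norm_exp]; congr 1; simp
  rw [e1, e2] at h
  have : ‖(2:ℂ)‖ = 2 := by simp
  rw [this]
  have := Real.exp_pos (N * A.im); have := Real.exp_pos (N * (-A.im))
  linarith

lemma cos_sum {t : ℝ} (ht : 0 < t) : ∃ C1 : ℝ, ∀ (A : ℂ) (s : Finset ℤ), ∑ N ∈ s, ‖Complex.exp (-t * N^2) * Complex.cos (N * A)‖ ≤ C1 * Real.exp (A.im^2/(4*t)) := by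
  obtain ⟨C1, h⟩ := gauss_sum ht
  refine ⟨2 * C1, fun A s => ?_⟩
  have hb : ∀ (b : ℝ) (N : ℤ), Real.exp (-t * N^2) * Real.exp (N * b) = Real.exp (-t * ((N:ℝ) - b/(2*t))^2) * Real.exp (b^2/(4*t)) := by
    intro b N
    rw [← Real.exp_add, ← Real.exp_add]; congr 1; field_simp; ring
  calc _ ≤ ∑ N ∈ s, (Real.exp (-t * ((N:ℝ) - A.im/(2*t))^2) * Real.exp (A.im^2/(4*t)) + Real.exp (-t * ((N:ℝ) - (-A.im)/(2*t))^2) * Real.exp (A.im^2/(4*t))) := by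
        refine Finset.sum_le_sum (fun N _ => ?_)
        have h2 := hb (-A.im) N
        rw [neg_sq] at h2
        rw [← hb, ← h2, norm_mul, ← mul_add]
        have : ‖Complex.exp (-t * N^2)‖ = Real.exp (-t * N^2) := by
          rw [show (-(t:ℂ) * (N:ℂ)^2) = ((-t * N^2 : ℝ) : ℂ) by push_cast; ring, ← Complex.ofReal_exp, Complex.norm_real, Real.norm_of_nonneg (Real.exp_pos _).le]
        rw [this]
        gcongr
        exact norm_cos_int N A
    _ = (∑ N ∈ s, Real.exp (-t * ((N:ℝ) - A.im/(2*t))^2) + ∑ N ∈ s, Real.exp (-t * ((N:ℝ) - (-A.im)/(2*t))^2)) * Real.exp (A.im^2/(4*t)) := by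
        rw [← Finset.sum_add_distrib, Finset.sum_mul]; refine Finset.sum_congr rfl (fun N _ => by ring)
    _ ≤ (C1 + C1) * Real.exp (A.im^2/(4*t)) := by
        gcongr
        · exact h _ s
        · exact h _ s
    _ = _ := by ring

noncomputable def Th (t : ℝ) (A : ℂ) : ℂ := ∑' k : ℤ, Complex.exp (-(π * k * (π * k - A)) / t)

lemma theta_eq {t : ℝ} (ht : 0 < t) (A : ℂ) : ∑' N : ℤ, Complex.exp (-t * N^2) * Complex.cos (N * A) =
    (√(π/t) : ℝ) * Complex.exp (-A^2/(4*t)) * Th t A := by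
  have ht' : (t:ℂ) ≠ 0 := by exact_mod_cast ht.ne'
  have hp' : (π:ℂ) ≠ 0 := by exact_mod_cast Real.pi_ne_zero
  set f : ℤ → ℂ := fun N => Complex.exp (-t * N^2 + Complex.I * A * N) with hf
  have hsum : Summable f := by
    refine Summable.of_norm ?_
    obtain ⟨C1, h⟩ := gauss_sum ht
    refine summable_of_sum_le (c := C1 * Real.exp (A.im^2/(4*t))) (fun _ => norm_nonneg _) (fun s => ?_)
    have e : ∀ N : ℤ, ‖f N‖ = Real.exp (-t * ((N:ℝ) - (-A.im)/(2*t))^2) * Real.exp (A.im^2/(4*t)) := by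
      intro N
      rw [hf, Complex.norm_exp, ← Real.exp_add]; congr 1
      have : (-(t:ℂ) * (N:ℂ)^2) = ((-t * N^2 : ℝ) : ℂ) := by push_cast; ring
      simp only [this, Complex.add_re, Complex.ofReal_re]
      simp
      field_simp; ring
    simp only [e]
    rw [← Finset.sum_mul]
    gcongr
    exact h _ s
  have hneg : Summable fun N : ℤ => f (-N) := (Equiv.neg ℤ).summable_iff.2 hsum
  have e1 : ∀ N : ℤ, Complex.exp (-t * N^2) * Complex.cos (N * A) = (1/2) * f N + (1/2) * f (-N) := by
    intro N
    simp only [hf, Complex.cos, Complex.exp_add]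
    push_cast
    rw [neg_sq, show (N:ℂ) * A * Complex.I = Complex.I * A * N by ring, show -((N:ℂ) * A) * Complex.I = Complex.I * A * (-N) by ring]
    ring
  rw [tsum_congr e1, Summable.tsum_add (hsum.mul_left _) (hneg.mul_left _), tsum_mul_left, tsum_mul_left]
  have e2 : ∑' N : ℤ, f (-N) = ∑' N : ℤ, f N := (Equiv.neg ℤ).tsum_eq f
  rw [e2]
  have key := Complex.tsum_exp_neg_quadratic (a := ((t/π : ℝ):ℂ)) (by rw [Complex.ofReal_re]; positivity) (Complex.I * A / (2*π))
  have e3 : ∑' N : ℤ, f N = ∑' n : ℤ, Complex.exp (-π * ((t/π : ℝ):ℂ) * n^2 + 2 * π * (Complex.I * A / (2*π)) * n) := by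
    refine tsum_congr (fun N => ?_)
    simp only [hf]; congr 1; push_cast; field_simp
  rw [e3, key]
  have e4 : (1:ℂ) / ((t/π : ℝ):ℂ)^(1/2:ℂ) = (√(π/t) : ℝ) := by
    rw [show (1/2:ℂ) = ((1/2:ℝ):ℂ) by push_cast; ring, ← Complex.ofReal_cpow (by positivity), ← Real.sqrt_eq_rpow, show π/t = (t/π)⁻¹ by rw [inv_div], Real.sqrt_inv]
    push_cast; rw [one_div]
  have e5 : ∑' n : ℤ, Complex.exp (-π / ((t/π : ℝ):ℂ) * (n + Complex.I * (Complex.I * A / (2*π)))^2) = Complex.exp (-A^2/(4*t)) * Th t A := by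
    rw [Th, ← tsum_mul_left]
    refine tsum_congr (fun k => ?_)
    rw [← Complex.exp_add]; congr 1
    have hI := Complex.I_sq
    rw [show Complex.I * (Complex.I * A / (2*π)) = -A/(2*π) by linear_combination (A/(2*π))*hI]
    push_cast; field_simp; ring
  rw [e4, e5]; ring

lemma Th_term {ε t : ℝ} (hε : 0 < ε) (ht : 0 < t) {A : ℂ} (h1 : ε ≤ A.re) (h2 : A.re ≤ π - ε) (k : ℤ) :
    ‖Complex.exp (-(π * k * (π * k - A)) / t)‖ ≤ Real.exp (-(π * ε / t) * |(k:ℝ)|) := by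
  have hp := Real.pi_pos
  rw [Complex.norm_exp]
  apply Real.exp_le_exp.2
  have e : (-(π * k * (π * k - A)) / t : ℂ).re = -(π * k * (π * k - A.re)) / t := by
    rw [Complex.div_ofReal_re]
    have : (-(π * k * (π * k - A)) : ℂ) = ((-(π * k) : ℝ) : ℂ) * (((π * k : ℝ) : ℂ) - A) := by push_cast; ring
    rw [this, Complex.re_ofReal_mul, Complex.sub_re, Complex.ofReal_re]; ring
  rw [e, show -(π * ε / t) * |(k:ℝ)| = -(π * ε * |(k:ℝ)|) / t by ring]
  refine div_le_div_of_nonneg_right (neg_le_neg ?_) ht.le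
  rw [mul_assoc, mul_assoc]
  refine mul_le_mul_of_nonneg_left ?_ hp.le
  rcases lt_trichotomy k 0 with hk | hk | hk
  · have hk' : (k:ℝ) ≤ -1 := by exact_mod_cast (by omega : k ≤ -1)
    rw [abs_of_neg (by linarith)]
    have : ε ≤ A.re - π * k := by nlinarith
    nlinarith
  · simp [hk]
  · have hk' : (1:ℝ) ≤ k := by exact_mod_cast hk
    rw [abs_of_pos (by linarith)]
    have : ε ≤ π * k - A.re := by nlinarith
    nlinarith

lemma Th_bound {ε : ℝ} (hε : 0 < ε) : ∃ Q : ℝ, ∀ t, 0 < t → t ≤ 1 → ∀ A : ℂ, ε ≤ A.re → A.re ≤ π - ε → ‖Th t A‖ ≤ Q := by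
  have hs := summable_int_exp (mul_pos Real.pi_pos hε)
  refine ⟨_, fun t ht ht1 A h1 h2 => tsum_of_norm_bounded hs.hasSum (fun k => (Th_term hε ht h1 h2 k).trans ?_)⟩
  apply Real.exp_le_exp.2
  have : π * ε ≤ π * ε / t := by rw [le_div_iff₀ ht]; nlinarith [mul_pos Real.pi_pos hε]
  nlinarith [abs_nonneg (k:ℝ)]

lemma Th_tendsto {ε : ℝ} (hε : 0 < ε) (A : ℝ → ℂ) (hA : ∀ᶠ t in 𝓝[>] (0:ℝ), ε ≤ (A t).re ∧ (A t).re ≤ π - ε) :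
    Tendsto (fun t => Th t (A t)) (𝓝[>] 0) (𝓝 1) := by
  have hs := summable_int_exp (mul_pos Real.pi_pos hε)
  have e1 : (1:ℂ) = ∑' k : ℤ, (if k = 0 then 1 else 0 : ℂ) := by simp
  rw [e1]
  unfold Th
  have ht : ∀ᶠ t in 𝓝[>] (0:ℝ), 0 < t ∧ t ≤ 1 := by
    filter_upwards [Ioc_mem_nhdsGT (zero_lt_one (α := ℝ))] with t h using h
  refine tendsto_tsum_of_dominated_convergence hs (fun k => ?_) ?_
  · by_cases hk : k = 0
    · simp [hk]
    · rw [if_neg hk]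
      have hk' : 0 < |(k:ℝ)| := by positivity
      refine squeeze_zero_norm' (a := fun t => Real.exp (-(π * ε / t) * |(k:ℝ)|)) ?_ ?_
      · filter_upwards [hA, ht] with t h1 h2 using Th_term hε h2.1 h1.1 h1.2 k
      · refine Real.tendsto_exp_atBot.comp ?_
        have h : Tendsto (fun t : ℝ => (π * ε * |(k:ℝ)|) * t⁻¹) (𝓝[>] 0) atTop := (tendsto_inv_nhdsGT_zero).const_mul_atTop (by positivity)
        refine (tendsto_neg_atTop_atBot.comp h).congr (fun t => ?_)
        simp only [Function.comp]; ring
  · filter_upwards [hA, ht] with t h1 h2 k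
    refine (Th_term hε h2.1 h1.1 h1.2 k).trans ?_
    apply Real.exp_le_exp.2
    have : π * ε ≤ π * ε / t := by rw [le_div_iff₀ h2.1]; nlinarith [mul_pos Real.pi_pos hε]
    nlinarith [abs_nonneg (k:ℝ)]

noncomputable def Wv (θ t v : ℝ) : ℂ := θ + Complex.I * (√t * v)
noncomputable def Zv (c θ t v ψ : ℝ) : ℂ := c * Complex.cos (Wv θ t v) + t * Complex.exp (ψ * Complex.I)
noncomputable def Gg (θ η t v : ℝ) : ℂ := Complex.exp (((θ:ℂ) - η + Complex.I * (√t * v))^2 / (4*t)) * Complex.sin (Wv θ t v)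

lemma norm_sin_le (w : ℂ) : ‖Complex.sin w‖ ≤ Real.exp |w.im| := by
  rw [Complex.sin, norm_div, norm_mul]
  have h := norm_sub_le (Complex.exp (-w * Complex.I)) (Complex.exp (w * Complex.I))
  have e1 : ‖Complex.exp (w * Complex.I)‖ ≤ Real.exp |w.im| := by
    rw [Complex.norm_exp]; apply Real.exp_le_exp.2; simp; exact neg_le_abs _
  have e2 : ‖Complex.exp (-w * Complex.I)‖ ≤ Real.exp |w.im| := by
    rw [Complex.norm_exp]; apply Real.exp_le_exp.2; simp; exact le_abs_self _
  have : ‖(2:ℂ)‖ = 2 := by simp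
  rw [this, Complex.norm_I]
  linarith

set_option maxHeartbeats 1000000 in
lemma KB {c θ : ℝ} (η : ℝ) (hc0 : 0 < c) (hc1 : c < 1) (hθ : θ ∈ Set.Ioo 0 π) :
    ∃ ε > 0, ∃ t1 > 0, t1 ≤ 1 ∧ ∃ C : ℝ, ∀ t, 0 < t → t ≤ t1 → ∀ v ψ : ℝ, Om (Zv c θ t v ψ) ∧ ε ≤ (AA (Zv c θ t v ψ)).re ∧ (AA (Zv c θ t v ψ)).re ≤ π - ε ∧
      ‖Gg θ η t v‖ * Real.exp (-((AA (Zv c θ t v ψ))^2).re/(4*t)) ≤ C * Real.exp (-|v|) * Real.exp (-(Real.arccos (c * Real.cos θ)^2 - (θ-η)^2)/(4*t)) := by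
  obtain ⟨κ, hκ, HD⟩ := D_key hc0 hc1 hθ
  have hct : |Real.cos θ| < 1 := by
    have hs : 0 < Real.sin θ := Real.sin_pos_of_pos_of_lt_pi hθ.1 hθ.2
    rw [← sq_lt_one_iff_abs_lt_one]
    nlinarith [Real.sin_sq_add_cos_sq θ]
  have hct0 := abs_nonneg (Real.cos θ)
  set μ := (1 + |Real.cos θ|)/2 with hμ
  have hμ1 : μ < 1 := by rw [hμ]; linarith
  have hμ0 : 0 < μ := by rw [hμ]; linarith
  set h0 := (1 - |Real.cos θ|)/2 with hh0
  have hh0p : 0 < h0 := by rw [hh0]; linarith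
  have hσ2 : 0 < 1 - μ^2 := by nlinarith
  set σ := √(1 - μ^2) with hσ
  have hσp : 0 < σ := Real.sqrt_pos.2 hσ2
  set L := 2*(π/σ+1) with hL
  set s1 := min 1 (κ/8) with hs1
  have hs1p : 0 < s1 := by rw [hs1]; positivity
  have hs11 : s1 ≤ 1 := min_le_left _ _
  have hs1k : s1 ≤ κ/8 := min_le_right _ _
  refine ⟨Real.arccos μ, Real.arccos_pos.2 hμ1, min (s1^2) h0, by positivity, (min_le_left _ _).trans (by nlinarith), Real.exp (L/4 + κ/(4*s1^2)), fun t ht ht1 v ψ => ?_⟩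
  have hts : √t ≤ s1 := by rw [Real.sqrt_le_left hs1p.le]; exact ht1.trans (min_le_left _ _)
  have hth : t ≤ h0 := ht1.trans (min_le_right _ _)
  set s := √t with hs
  have hsp : 0 < s := Real.sqrt_pos.2 ht
  have hss : s^2 = t := Real.sq_sqrt ht.le
  set y : ℝ := s * v with hy
  obtain ⟨d1, d2⟩ := HD y
  have hWy : Wv θ t v = θ + Complex.I * y := by simp only [Wv, hy, ← hs]; push_cast; ring
  rw [← hWy] at d1 d2
  set x : ℂ := c * Complex.cos (Wv θ t v) with hx
  set Z := Zv c θ t v ψ with hZ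
  have hZx : ‖Z - x‖ = t := by
    rw [hZ, Zv, add_sub_cancel_left, norm_mul, Complex.norm_exp_ofReal_mul_I, mul_one, Complex.norm_real, Real.norm_of_nonneg ht.le]
  have hball : ∀ z : ℂ, ‖z - x‖ ≤ ‖Z - x‖ → |Cz z| ≤ μ := by
    intro z hz
    have h1 := Cz_lip z x
    have h2 := abs_sub_abs_le_abs_sub (Cz z) (Cz x)
    rw [hμ]; rw [hZx] at hz; rw [hh0] at hth
    linarith
  have hCZ := hball Z le_rfl
  have hOm : Om Z := (Om_iff Z).2 (hCZ.trans_lt hμ1)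
  have hAr := AA_re hOm
  have hAc : (AA Z).re = Real.arccos (Cz Z) := by rw [← Cz_AA hOm, Real.arccos_cos hAr.1.le hAr.2.le]
  have hlip := AA_sq_lip σ μ hσp hμ1 (by rw [hσ, Real.sq_sqrt hσ2.le]) x Z hball
  rw [hZx, ← hL] at hlip
  refine ⟨hOm, ?_, ?_, ?_⟩
  · rw [hAc]; exact Real.arccos_le_arccos (abs_le.1 hCZ).2
  · rw [hAc, ← Real.arccos_neg]; exact Real.arccos_le_arccos (abs_le.1 hCZ).1
  · have hre : (AA x ^ 2).re - L * t ≤ (AA Z ^ 2).re := by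
      have := Complex.abs_re_le_norm (AA Z ^ 2 - AA x ^ 2)
      rw [Complex.sub_re] at this
      have := neg_abs_le ((AA Z ^ 2).re - (AA x ^ 2).re)
      linarith
    have hG : ‖Gg θ η t v‖ ≤ Real.exp (((θ-η)^2 - y^2)/(4*t)) * Real.exp |y| := by
      rw [Gg, norm_mul]
      have i1 : (Wv θ t v).im = y := by rw [hWy]; simp
      have := norm_sin_le (Wv θ t v)
      rw [i1] at this
      have i2 : ‖Complex.exp (((θ:ℂ) - η + Complex.I * (√t * v))^2 / (4*t))‖ = Real.exp (((θ-η)^2 - y^2)/(4*t)) := by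
        rw [Complex.norm_exp]; congr 1
        rw [show ((4:ℂ)*t) = ((4*t:ℝ):ℂ) by push_cast; ring, Complex.div_ofReal_re]
        congr 1
        rw [show (θ:ℂ) - η + Complex.I * (√t * v) = ((θ - η : ℝ):ℂ) + Complex.I * (y:ℝ) by rw [hy]; push_cast; ring, pow_two, Complex.mul_re]
        simp; ring
      rw [i2]
      gcongr
    have hay : |y| = s * |v| := by rw [hy, abs_mul, abs_of_pos hsp]
    have hyy : y^2 = t * v^2 := by rw [hy, mul_pow, hss]
    calc _ ≤ (Real.exp (((θ-η)^2 - y^2)/(4*t)) * Real.exp |y|) * Real.exp (-((AA x ^ 2).re - L * t)/(4*t)) := by gcongr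
      _ ≤ _ := by
        rw [← Real.exp_add, ← Real.exp_add, ← Real.exp_add, ← Real.exp_add]
        apply Real.exp_le_exp.2
        have q1 : |v|/s1 - 1/s1^2 ≤ v^2/(1 + |y|) := by
          rw [le_div_iff₀ (by positivity)]
          have : |y| ≤ s1 * |v| := by rw [hay]; gcongr
          have hv := abs_nonneg v
          by_cases hneg : |v|/s1 - 1/s1^2 ≤ 0
          · have : 0 ≤ 1 + |y| := by positivity
            nlinarith [sq_nonneg v]
          · push Not at hneg
            calc (|v|/s1 - 1/s1^2) * (1 + |y|) ≤ (|v|/s1 - 1/s1^2) * (1 + s1 * |v|) := by gcongr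
              _ = |v|^2 - 1/s1^2 := by field_simp; ring
              _ ≤ v^2 := by rw [sq_abs]; have : 0 < 1/s1^2 := by positivity
                            linarith
        set E := Real.arccos (c * Real.cos θ)^2 with hE
        have q2 : E - y^2 + κ * (t * (|v|/s1 - 1/s1^2)) ≤ (AA x ^ 2).re := by
          refine le_trans ?_ d2
          rw [hyy, mul_div_assoc]
          gcongr
        have q3 : κ/(4*s1) ≥ 2 := by rw [ge_iff_le, le_div_iff₀ (by positivity)]; linarith
        have q4 : κ * (t * (|v|/s1 - 1/s1^2)) / (4*t) = κ/(4*s1)*|v| - κ/(4*s1^2) := by field_simp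
        have q5 : -((AA x ^ 2).re - L * t)/(4*t) ≤ -(E - y^2)/(4*t) - (κ/(4*s1)*|v| - κ/(4*s1^2)) + L/4 := by
          rw [← q4]
          rw [show -(E - y^2)/(4*t) - κ * (t * (|v|/s1 - 1/s1^2)) / (4*t) + L/4 = -((E - y^2 + κ * (t * (|v|/s1 - 1/s1^2))) - L * t)/(4*t) by field_simp; ring]
          gcongr
        have q6 : ((θ-η)^2 - y^2)/(4*t) + -(E - y^2)/(4*t) = -(E - (θ-η)^2)/(4*t) := by ring
        have q7 : |y| ≤ |v| := by rw [hay]; nlinarith [abs_nonneg v]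
        have q8 : 2 * |v| ≤ κ/(4*s1)*|v| := mul_le_mul_of_nonneg_right q3 (abs_nonneg v)
        linarith

noncomputable def mm : Measure (ℝ × ℝ) := (volume : Measure ℝ).prod ((volume : Measure ℝ).restrict (Set.Ioc 0 (2*π)))

lemma int_exp_abs : Integrable (fun v : ℝ => Real.exp (-|v|)) := by
  refine (integrable_inv_one_add_sq.const_mul 2).mono' (by fun_prop) (Eventually.of_forall (fun v => ?_))
  rw [Real.norm_of_nonneg (Real.exp_pos _).le, Real.exp_neg, ← div_eq_mul_inv, inv_eq_one_div, div_le_div_iff₀ (Real.exp_pos _) (by positivity)]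
  have := Real.quadratic_le_exp_of_nonneg (abs_nonneg v)
  rw [sq_abs] at this
  nlinarith [abs_nonneg v]

lemma int_exp_abs_mm : Integrable (fun p : ℝ × ℝ => Real.exp (-|p.1|)) mm := by
  have := Integrable.mul_prod int_exp_abs (integrable_const (1:ℝ) (μ := (volume : Measure ℝ).restrict (Set.Ioc 0 (2*π))))
  unfold mm
  simpa using this

noncomputable def FN (c θ η t : ℝ) (d : ℕ) (N : ℤ) (p : ℝ × ℝ) : ℂ :=
  Complex.exp (-t * N^2) * (Gg θ η t p.1 * ((Polynomial.Chebyshev.T ℂ N).eval (Zv c θ t p.1 p.2) * Complex.exp (-(d * (p.2 * Complex.I)))))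

lemma FN_cont (c θ η t : ℝ) (d : ℕ) (N : ℤ) : Continuous (FN c θ η t d N) := by
  unfold FN Gg Zv Wv
  have := (Polynomial.Chebyshev.T ℂ N).continuous
  fun_prop

noncomputable def HH (c θ η t : ℝ) (d : ℕ) (p : ℝ × ℝ) : ℂ :=
  Gg θ η t p.1 * Complex.exp (-(d * (p.2 * Complex.I))) * ((√(π/t) : ℝ) * Complex.exp (-(AA (Zv c θ t p.1 p.2))^2/(4*t)) * Th t (AA (Zv c θ t p.1 p.2)))

lemma FN_eq {c θ η t : ℝ} {d : ℕ} {p : ℝ × ℝ} (hO : Om (Zv c θ t p.1 p.2)) (N : ℤ) : FN c θ η t d N p = 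
    (Gg θ η t p.1 * Complex.exp (-(d * (p.2 * Complex.I)))) * (Complex.exp (-t * N^2) * Complex.cos (N * AA (Zv c θ t p.1 p.2))) := by
  unfold FN
  have : (Polynomial.Chebyshev.T ℂ N).eval (Zv c θ t p.1 p.2) = Complex.cos (N * AA (Zv c θ t p.1 p.2)) := by
    rw [← Polynomial.Chebyshev.T_complex_cos, cos_AA hO]
  rw [this]; ring

lemma HH_tsum {c θ η t : ℝ} {d : ℕ} {p : ℝ × ℝ} (ht : 0 < t) (hO : Om (Zv c θ t p.1 p.2)) : HH c θ η t d p = ∑' N, FN c θ η t d N p := by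
  simp only [FN_eq hO]
  rw [tsum_mul_left, theta_eq ht, HH]

lemma norm_e (d : ℕ) (ψ : ℝ) : ‖Complex.exp (-(d * (ψ * Complex.I)))‖ = 1 := by
  rw [Complex.norm_exp]; simp

lemma FN_bound {c θ η t C E : ℝ} (d : ℕ) (ht : 0 < t) (h : ∀ v ψ : ℝ, Om (Zv c θ t v ψ) ∧ 
      ‖Gg θ η t v‖ * Real.exp (-((AA (Zv c θ t v ψ))^2).re/(4*t)) ≤ C * Real.exp (-|v|) * E) :
    ∃ C' : ℝ, ∀ p s, ∑ N ∈ s, ‖FN c θ η t d N p‖ ≤ C' * Real.exp (-|p.1|) := by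
  obtain ⟨C1, h1⟩ := cos_sum ht
  have hC1 : 0 ≤ C1 := by
    have := h1 0 ∅
    simpa using this
  refine ⟨C1 * Real.exp (π^2/(4*t)) * (C * E), fun p s => ?_⟩
  obtain ⟨hO, hb⟩ := h p.1 p.2
  simp only [FN_eq hO, norm_mul _ (Complex.exp (-t * _^2) * _), ← Finset.mul_sum]
  rw [norm_mul, norm_e, mul_one]
  set A := AA (Zv c θ t p.1 p.2) with hA
  have hr := AA_re hO
  rw [← hA] at hr
  have him : A.im^2 ≤ π^2 - (A^2).re := by
    rw [pow_two A, Complex.mul_re]; nlinarith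
  calc _ ≤ ‖Gg θ η t p.1‖ * (C1 * Real.exp (A.im^2/(4*t))) := by
        gcongr; exact h1 A s
    _ ≤ ‖Gg θ η t p.1‖ * (C1 * Real.exp ((π^2 - (A^2).re)/(4*t))) := by gcongr
    _ = C1 * Real.exp (π^2/(4*t)) * (‖Gg θ η t p.1‖ * Real.exp (-(A^2).re/(4*t))) := by
        rw [show (π^2 - (A^2).re)/(4*t) = π^2/(4*t) + -(A^2).re/(4*t) by ring, Real.exp_add]; ring
    _ ≤ C1 * Real.exp (π^2/(4*t)) * (C * Real.exp (-|p.1|) * E) := by gcongr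
    _ = _ := by ring

lemma FN_hasSum {c θ η t C E : ℝ} (d : ℕ) (ht : 0 < t) (h : ∀ v ψ : ℝ, Om (Zv c θ t v ψ) ∧ 
      ‖Gg θ η t v‖ * Real.exp (-((AA (Zv c θ t v ψ))^2).re/(4*t)) ≤ C * Real.exp (-|v|) * E) :
    (∀ N, Integrable (FN c θ η t d N) mm) ∧ HasSum (fun N : ℤ => ∫ p, FN c θ η t d N p ∂mm) (∫ p, HH c θ η t d p ∂mm) := by
  obtain ⟨C', hC'⟩ := FN_bound (η := η) d ht h
  have hi : ∀ N, Integrable (FN c θ η t d N) mm := fun N => by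
    refine (int_exp_abs_mm.const_mul C').mono' (FN_cont c θ η t d N).aestronglyMeasurable (Eventually.of_forall (fun p => ?_))
    simpa using hC' p {N}
  refine ⟨hi, ?_⟩
  have := hasSum_integral_of_summable_integral_norm (F := FN c θ η t d) (μ := mm) hi (by
    refine summable_of_sum_le (c := ∫ p : ℝ × ℝ, C' * Real.exp (-|p.1|) ∂mm) (fun N => integral_nonneg (fun _ => norm_nonneg _)) (fun s => ?_)
    rw [← integral_finsetSum _ (fun N _ => (hi N).norm)]
    exact integral_mono (integrable_finsetSum _ (fun N _ => (hi N).norm)) (int_exp_abs_mm.const_mul C') (fun p => hC' p s))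
  have e : ∫ p, HH c θ η t d p ∂mm = ∫ p, ∑' N, FN c θ η t d N p ∂mm := 
    integral_congr_ae (Eventually.of_forall (fun p => HH_tsum ht (h p.1 p.2).1))
  rw [e]; exact this

lemma HH_meas {c θ η t C E : ℝ} (d : ℕ) (ht : 0 < t) (h : ∀ v ψ : ℝ, Om (Zv c θ t v ψ) ∧ 
      ‖Gg θ η t v‖ * Real.exp (-((AA (Zv c θ t v ψ))^2).re/(4*t)) ≤ C * Real.exp (-|v|) * E) :
    AEStronglyMeasurable (HH c θ η t d) mm := by
  obtain ⟨C', hC'⟩ := FN_bound (η := η) d ht h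
  refine aestronglyMeasurable_of_tendsto_ae (atTop : Filter (Finset ℤ)) (f := fun s p => ∑ N ∈ s, FN c θ η t d N p) (fun s => ?_) (Eventually.of_forall (fun p => ?_))
  · exact (continuous_finsetSum _ (fun N _ => FN_cont c θ η t d N)).aestronglyMeasurable
  · rw [HH_tsum ht (h p.1 p.2).1]
    have : Summable (fun N => FN c θ η t d N p) := 
      Summable.of_norm (summable_of_sum_le (fun _ => norm_nonneg _) (hC' p))
    exact this.hasSum

lemma FN_int {c θ η t : ℝ} {d : ℕ} {N : ℤ} (hi : Integrable (FN c θ η t d N) mm) :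
    ∫ p, FN c θ η t d N p ∂mm = Complex.exp (-t * N^2) * (2 * π * t^d / d.factorial) * ∫ v : ℝ, Gg θ η t v * (Polynomial.derivative^[d] (Polynomial.Chebyshev.T ℂ N)).eval (c * Complex.cos (Wv θ t v)) := by
  unfold mm at hi ⊢
  rw [integral_prod _ hi, ← integral_const_mul]
  congr 1; funext v
  have := circ_poly (Polynomial.Chebyshev.T ℂ N) t (c * Complex.cos (Wv θ t v)) d
  rw [intervalIntegral.integral_of_le (by positivity)] at this
  simp only [FN]
  rw [integral_const_mul, integral_const_mul]
  simp only [Zv]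
  rw [this]; ring

lemma FN_small {c θ η t : ℝ} {d : ℕ} {N : ℤ} (hi : Integrable (FN c θ η t d N) mm) (hN : N.natAbs < d) :
    ∫ p, FN c θ η t d N p ∂mm = 0 := by
  rw [FN_int hi, Polynomial.iterate_derivative_eq_zero (by rw [Polynomial.Chebyshev.natDegree_T]; exact hN)]
  simp

lemma FN_big {c θ η t : ℝ} {n l : ℕ} (hn : 1 ≤ n) (ht : 0 < t) (hi : Integrable (FN c θ η t (2*n+1) ((l+2*n+1:ℕ):ℤ)) mm) :
    ∫ p, FN c θ η t (2*n+1) ((l+2*n+1:ℕ):ℤ) p ∂mm = Complex.exp (-t * (l+2*n+1)^2) * (2 * π * t^(2*n+1) / (2*n+1).factorial) * 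
      ((2^(2*n) * (Nat.factorial (2*n-1):ℂ)) * ((4*π : ℝ) : ℂ) ^ (1/2 : ℂ) * ((l+2*n+1) * ∑ k ∈ Finset.range (l/2+1), aC n (l-2*k) k c * (Complex.exp (t * ((l-2*k:ℕ)+1)^2) * Complex.sin ((((l-2*k:ℕ):ℂ)+1)*η)))) := by
  rw [FN_int hi]
  have hne : (2^(2*n) * (Nat.factorial (2*n-1):ℂ)) ≠ 0 := mul_ne_zero (pow_ne_zero _ two_ne_zero) (by exact_mod_cast Nat.factorial_ne_zero _)
  push_cast
  congr 1
  have e : ∀ v : ℝ, Gg θ η t v * (Polynomial.derivative^[2*n+1] (Polynomial.Chebyshev.T ℂ ((l:ℤ)+2*n+1))).eval (c * Complex.cos (Wv θ t v)) =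
     (2^(2*n) * (Nat.factorial (2*n-1):ℂ)) * (((l:ℂ)+2*n+1) * ∑ k ∈ Finset.range (l/2+1), (aC n (l-2*k) k c : ℂ) * (Complex.exp (((θ:ℂ) - η + Complex.I * (√t * v))^2 / (4*t)) * Complex.sin (((((l-2*k:ℕ):ℝ)+1:ℝ):ℂ) * (θ + Complex.I * (√t * v))))) := by
    intro v
    have := main_alg n l hn c (Wv θ t v)
    have h2 := congrArg (fun z => (2^(2*n) * (Nat.factorial (2*n-1):ℂ)) * z) this
    beta_reduce at h2
    rw [mul_inv_cancel_left₀ hne] at h2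
    push_cast at h2 ⊢
    rw [Gg, mul_assoc, ← h2]
    simp only [Wv, Finset.mul_sum]
    refine Finset.sum_congr rfl (fun k _ => ?_)
    ring
  simp only [e]
  rw [integral_const_mul, integral_const_mul, integral_finsetSum _ (fun k _ => ((gauss_int t θ η _ ht).2).const_mul _), mul_assoc (2^(2*n) * (Nat.factorial (2*n-1):ℂ))]
  congr 1
  rw [Finset.mul_sum, Finset.mul_sum, Finset.mul_sum]
  refine Finset.sum_congr rfl (fun k _ => ?_)
  rw [integral_const_mul, (gauss_int t θ η _ ht).1]
  push_cast; ring

noncomputable def Kc (n : ℕ) (η t : ℝ) : ℝ := ((2*n-1).factorial / (2*π^(2*n+2)) / Real.sin η) * Real.exp (4*n*(n+1)*t) * (√(4*π))⁻¹ * (2^(2*n) * (2*n-1).factorial : ℝ)⁻¹ * ((2*n+1).factorial / (2*π*t^(2*n+1))) * (1/2)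

lemma cpx_hasSum_congr {f g : ℕ → ℂ} {a : ℂ} (h : HasSum f a) (e : ∀ l, g l = f l) : HasSum g a := by
  rw [show g = f from funext e]; exact h

lemma pK_repr {θ t C E : ℝ} (n : ℕ) (hn : 1 ≤ n) (J : ℕ → ℕ → ℕ → ℝ → ℝ) (hJ : IsJacobi J) (r η : ℝ)
    (hr : r ∈ Set.Ioo 0 (π/2)) (hη : η ∈ Set.Ioo 0 π) (ht : 0 < t) (h : ∀ v ψ : ℝ, Om (Zv (Real.cos r) θ t v ψ) ∧ 
      ‖Gg θ η t v‖ * Real.exp (-((AA (Zv (Real.cos r) θ t v ψ))^2).re/(4*t)) ≤ C * Real.exp (-|v|) * E) :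
    (pKernel n J t r η : ℂ) = Kc n η t * ∫ p, HH (Real.cos r) θ η t (2*n+1) p ∂mm := by
  obtain ⟨hi, hs⟩ := FN_hasSum (2*n+1) ht h
  have h1 := hs.nat_add_neg
  have h0 : ∫ p, FN (Real.cos r) θ η t (2*n+1) 0 p ∂mm = 0 := FN_small (hi 0) (by simp)
  rw [h0, add_zero] at h1
  have hneg : ∀ N : ℤ, FN (Real.cos r) θ η t (2*n+1) (-N) = FN (Real.cos r) θ η t (2*n+1) N := by
    intro N; funext p; simp [FN, Polynomial.Chebyshev.T_neg]
  simp only [hneg] at h1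
  rw [← hasSum_nat_add_iff' (2*n+1), Finset.sum_eq_zero (fun i hi' => by
    have := Finset.mem_range.1 hi'
    rw [FN_small (hi _) (by simpa using this), add_zero]), sub_zero] at h1
  have h2 := h1.mul_left (Kc n η t : ℂ)
  have h3 := Complex.hasSum_ofReal.2 (pKernel_hasSum n hn J hJ r η t hr hη ht)
  refine h3.unique ?_
  refine cpx_hasSum_congr h2 (fun l => ?_)
  rw [show l + (2*n+1) = l + 2*n+1 by ring, FN_big hn ht (hi _)]
  have hsq : ((4*π:ℝ):ℂ)^(1/2:ℂ) = ((√(4*π) : ℝ):ℂ) := by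
    rw [Real.sqrt_eq_rpow, Complex.ofReal_cpow (by positivity)]; norm_num
  rw [hsq]
  unfold Kc
  have q1 : ((√(4*π):ℝ):ℂ) ≠ 0 := by
    have : √(4*π) ≠ 0 := (Real.sqrt_pos.2 (by positivity)).ne'
    exact_mod_cast this
  have q2 : ((2*n-1).factorial : ℂ) ≠ 0 := by exact_mod_cast Nat.factorial_ne_zero _
  have q3 : ((2*n+1).factorial : ℂ) ≠ 0 := by exact_mod_cast Nat.factorial_ne_zero _
  have q4 : (t:ℂ) ≠ 0 := by exact_mod_cast ht.ne'
  have q5 : (π:ℂ) ≠ 0 := by exact_mod_cast Real.pi_ne_zero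
  have e : ((∑ k ∈ Finset.range (l/2+1), aC n (l-2*k) k (Real.cos r) * (Real.exp (-t * (l+2*n+1)^2) * Real.exp (4*n*(n+1)*t) * Real.exp (t * ((l-2*k : ℕ)+1)^2)) * Real.sin ((((l-2*k:ℕ):ℝ)+1)*η) : ℝ) : ℂ) = 
     Complex.exp (-t * (l+2*n+1)^2) * Complex.exp (4*n*(n+1)*t) * ∑ k ∈ Finset.range (l/2+1), aC n (l-2*k) k (Real.cos r) * (Complex.exp (t * ((l-2*k:ℕ)+1)^2) * Complex.sin ((((l-2*k:ℕ):ℂ)+1)*η)) := by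
    rw [Finset.mul_sum]
    push_cast
    refine Finset.sum_congr rfl (fun k _ => ?_)
    ring
  rw [Complex.ofReal_mul, Complex.ofReal_mul, e]
  set Sg := ∑ k ∈ Finset.range (l/2+1), (aC n (l-2*k) k (Real.cos r) : ℂ) * (Complex.exp (t * ((l-2*k:ℕ)+1)^2) * Complex.sin ((((l-2*k:ℕ):ℂ)+1)*η))
  push_cast
  field_simp
  ring

lemma taylor2 {f f' : ℝ → ℂ} {b : ℂ} (hf : ∀ᶠ s in 𝓝 (0:ℝ), HasDerivAt f (f' s) s) (hf' : HasDerivAt f' b 0)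
    (h0 : f 0 = 0) (h0' : f' 0 = 0) : Tendsto (fun s : ℝ => f s / s^2) (𝓝[>] 0) (𝓝 (b/2)) := by
  rw [Metric.tendsto_nhds]
  intro ε hε
  have h1 := (hasDerivAt_iff_isLittleO.1 hf').def (half_pos hε)
  obtain ⟨δ, hδ, H⟩ := Metric.eventually_nhds_iff.1 (hf.and h1)
  have hm : Ioo (0:ℝ) δ ∈ 𝓝[>] (0:ℝ) := Ioo_mem_nhdsGT hδ
  filter_upwards [hm] with s hs
  have hs0 : (0:ℝ) < s := hs.1
  have hsc : (s:ℂ) ≠ 0 := by exact_mod_cast hs0.ne'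
  have key := (convex_Icc (0:ℝ) s).norm_image_sub_le_of_norm_hasDerivWithin_le (f := fun x : ℝ => f x - b/2 * (x:ℂ)^2) (f' := fun x => f' x - b/2 * (2 * (x:ℂ))) (C := ε/2*s) (x := 0) (y := s)
    (fun x hx => by
      have hx' : dist x 0 < δ := by
        rw [Real.dist_eq, sub_zero, abs_of_nonneg hx.1]; linarith [hx.2, hs.2]
      have e := ((hasDerivAt_id x).ofReal_comp.pow 2).const_mul (b/2)
      have e2 := (H hx').1.sub e
      have e3 : HasDerivAt (fun x : ℝ => f x - b/2 * (x:ℂ)^2) (f' x - b/2 * (2 * (x:ℂ))) x := by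
        refine HasDerivAt.congr_deriv (f := fun x : ℝ => f x - b/2 * (x:ℂ)^2) e2 ?_
        simp
      exact e3.hasDerivWithinAt)
    (fun x hx => by
      have hx' : dist x 0 < δ := by
        rw [Real.dist_eq, sub_zero, abs_of_nonneg hx.1]; linarith [hx.2, hs.2]
      have e := (H hx').2
      rw [h0', sub_zero, sub_zero, Real.norm_of_nonneg hx.1] at e
      have : f' x - x • b = f' x - b/2*(2*(x:ℂ)) := by
        rw [Complex.real_smul]; ring
      rw [this] at e
      refine e.trans ?_
      gcongr; exact hx.2)
    ⟨le_refl _, hs0.le⟩ ⟨hs0.le, le_refl _⟩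
  simp only [h0, Complex.ofReal_zero, sub_zero, Real.norm_of_nonneg hs0.le] at key
  rw [dist_eq_norm]
  have e : f s / s^2 - b/2 = (f s - b/2*(s:ℂ)^2) / (s:ℂ)^2 := by field_simp
  rw [e, norm_div, norm_pow, Complex.norm_real, Real.norm_of_nonneg hs0.le, div_lt_iff₀ (by positivity)]
  have k2 : ‖f s - b/2*(s:ℂ)^2‖ ≤ ε/2*s*s := by simpa using key
  nlinarith [mul_pos hε (mul_pos hs0 hs0)]

noncomputable def Xs (c θ v ψ s : ℝ) : ℂ := c * Complex.cos (θ + Complex.I * (s*v)) + (s:ℂ)^2 * Complex.exp (ψ * Complex.I)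
noncomputable def Xs' (c θ v ψ s : ℝ) : ℂ := c * (-Complex.sin (θ + Complex.I * (s*v)) * (Complex.I * v)) + 2*(s:ℂ) * Complex.exp (ψ * Complex.I)

lemma lin_deriv (θ v s : ℝ) : HasDerivAt (fun s : ℝ => (θ:ℂ) + Complex.I * (s*v)) (Complex.I * v) s := by
  have := (((hasDerivAt_id s).ofReal_comp.mul_const (v:ℂ)).const_mul Complex.I).const_add (θ:ℂ)
  simpa using this

lemma Xs_deriv (c θ v ψ s : ℝ) : HasDerivAt (Xs c θ v ψ) (Xs' c θ v ψ s) s := by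
  have h1 := ((Complex.hasDerivAt_cos _).comp_of_eq s (lin_deriv θ v s) rfl).const_mul (c:ℂ)
  have h2 := ((hasDerivAt_id s).ofReal_comp.pow 2).mul_const (Complex.exp (ψ * Complex.I))
  have := h1.add h2
  refine HasDerivAt.congr_deriv (f := Xs c θ v ψ) this ?_
  simp [Xs']

lemma Xs'_deriv (c θ v ψ : ℝ) : HasDerivAt (Xs' c θ v ψ) (c * Complex.cos θ * v^2 + 2 * Complex.exp (ψ * Complex.I)) 0 := by
  have h1 := ((((Complex.hasDerivAt_sin _).comp_of_eq 0 (lin_deriv θ v 0) rfl).neg).mul_const (Complex.I * v)).const_mul (c:ℂ)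
  have h2 := ((hasDerivAt_id (0:ℝ)).ofReal_comp.const_mul 2).mul_const (Complex.exp (ψ * Complex.I))
  have := h1.add h2
  have e : ((c:ℂ) * Complex.cos θ * v^2 + 2 * Complex.exp (ψ * Complex.I)) = 
    ↑c * (-(Complex.cos (↑θ + Complex.I * (↑(0:ℝ) * ↑v)) * (Complex.I * ↑v)) * (Complex.I * ↑v)) +
      2 * ((1:ℝ):ℂ) * Complex.exp (↑ψ * Complex.I) := by
    simp only [Complex.ofReal_zero, zero_mul, mul_zero, add_zero, Complex.ofReal_one, mul_one]
    linear_combination (c:ℂ) * Complex.cos θ * v^2 * Complex.I_sq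
  rw [e]
  exact this

noncomputable def Ssq (c θ : ℝ) : ℝ := √(1 - (c*Real.cos θ)^2)
noncomputable def Dl (c θ : ℝ) : ℝ := Real.arccos (c*Real.cos θ)
noncomputable def Qq (c θ : ℝ) : ℝ := 1 - c*Real.cos θ * Dl c θ / Ssq c θ
noncomputable def Ff (c θ : ℝ) : ℝ := 2*(1-c^2)/(Ssq c θ)^2 * Qq c θ

lemma u_bd {c θ : ℝ} (hc0 : 0 < c) (hc1 : c < 1) : -1 < c * Real.cos θ ∧ c * Real.cos θ < 1 := by
  have h1 := Real.cos_le_one θ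
  have h2 := Real.neg_one_le_cos θ
  constructor <;> nlinarith

lemma Ssq_pos {c θ : ℝ} (hc0 : 0 < c) (hc1 : c < 1) : 0 < Ssq c θ := by
  obtain ⟨h1, h2⟩ := u_bd (θ := θ) hc0 hc1
  exact Real.sqrt_pos.2 (by nlinarith)

lemma Ssq_sq {c θ : ℝ} (hc0 : 0 < c) (hc1 : c < 1) : Ssq c θ^2 = 1 - (c*Real.cos θ)^2 := by
  obtain ⟨h1, h2⟩ := u_bd (θ := θ) hc0 hc1
  exact Real.sq_sqrt (by nlinarith)

lemma phase_s {c θ η : ℝ} (hc0 : 0 < c) (hc1 : c < 1) 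
    (hcrit : θ - η = Dl c θ * (c * Real.sin θ) / Ssq c θ) (v ψ : ℝ) :
    Tendsto (fun s : ℝ => ((AA (Xs c θ v ψ s))^2 - ((θ:ℂ) - η + Complex.I * (s*v))^2 - ((Dl c θ^2 - (θ-η)^2 : ℝ):ℂ)) / (s:ℂ)^2)
      (𝓝[>] 0) (𝓝 ((Ff c θ * v^2 - 4 * (Dl c θ / Ssq c θ : ℝ) * Complex.exp (ψ * Complex.I))/2)) := by
  obtain ⟨hu1, hu2⟩ := u_bd (θ := θ) hc0 hc1
  have hX0 : Xs c θ v ψ 0 = ((c * Real.cos θ : ℝ) : ℂ) := by simp [Xs]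
  have hX0' : Xs' c θ v ψ 0 = -(c * Complex.sin θ * (Complex.I * v)) := by simp [Xs', mul_assoc]
  have hO : Om (Xs c θ v ψ 0) := by rw [hX0]; exact Om_real hu1 hu2
  have hev : ∀ᶠ s in 𝓝 (0:ℝ), Om (Xs c θ v ψ s) := 
    (Xs_deriv c θ v ψ 0).continuousAt.eventually (Om_open.mem_nhds hO)
  have hSp := Ssq_pos (θ := θ) hc0 hc1
  have hSne : (Ssq c θ : ℂ) ≠ 0 := by exact_mod_cast hSp.ne'
  have hS2 : (Ssq c θ : ℂ)^2 = 1 - (c * Complex.cos θ)^2 := by exact_mod_cast Ssq_sq (θ := θ) hc0 hc1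
  have hsS : sS (Xs c θ v ψ 0) = Ssq c θ := by rw [hX0]; exact sq_real hu1 hu2
  have hAA : AA (Xs c θ v ψ 0) = Dl c θ := by rw [hX0]; exact AA_real hu1 hu2
  have hcr : (θ:ℂ) - η = Dl c θ * (c * Complex.sin θ) / Ssq c θ := by exact_mod_cast hcrit
  refine taylor2 (f' := fun s => 2 * AA (Xs c θ v ψ s) * (-(sS (Xs c θ v ψ s))⁻¹ * Xs' c θ v ψ s) - 2 * ((θ:ℂ) - η + Complex.I * (s*v)) * (Complex.I * v)) ?_ ?_ ?_ ?_
  · filter_upwards [hev] with s hs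
    have h1 := ((AA_deriv hs).comp_of_eq s (Xs_deriv c θ v ψ s) rfl).pow 2
    have h2 := (lin_deriv (θ-η) v s).pow 2
    have := (h1.sub h2).sub_const ((Dl c θ^2 - (θ-η)^2 : ℝ):ℂ)
    simp only [Complex.ofReal_sub (θ) η] at this
    refine HasDerivAt.congr_deriv (f := fun s : ℝ => ((AA (Xs c θ v ψ s))^2 - ((θ:ℂ) - η + Complex.I * (s*v))^2 - ((Dl c θ^2 - (θ-η)^2 : ℝ):ℂ))) this ?_
    simp
  · have h1 := ((AA_deriv hO).comp_of_eq 0 (Xs_deriv c θ v ψ 0) rfl).const_mul 2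
    have h2 := (((sq_deriv hO).comp_of_eq 0 (Xs_deriv c θ v ψ 0) rfl).inv (sq_ne hO)).neg
    have h3 := h2.mul (Xs'_deriv c θ v ψ)
    have h4 := ((lin_deriv (θ-η) v 0).const_mul 2).mul_const (Complex.I * (v:ℂ))
    have h5 := (h1.mul h3).sub h4
    simp only [Function.comp_apply, Complex.ofReal_sub] at h5
    refine HasDerivAt.congr_deriv (f := fun s : ℝ => 2 * AA (Xs c θ v ψ s) * (-(sS (Xs c θ v ψ s))⁻¹ * Xs' c θ v ψ s) - 2 * ((θ:ℂ) - η + Complex.I * (s*v)) * (Complex.I * v)) h5 ?_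
    simp only [Pi.neg_apply, Pi.inv_apply, Pi.mul_apply, Function.comp_apply]
    rw [hsS, hAA, hX0', hX0]
    unfold Ff Qq
    push_cast
    have hsc := Complex.sin_sq_add_cos_sq (θ:ℂ)
    have hI := Complex.I_sq
    field_simp
    generalize Complex.exp (ψ * Complex.I) = Ee
    generalize Complex.cos (θ:ℂ) = Cc at *
    generalize Complex.sin (θ:ℂ) = Sn at *
    generalize (Ssq c θ : ℂ) = Sq at *
    generalize (Dl c θ : ℂ) = D at *
    linear_combination (2*Sq*c^2*Sn^2*v^2 - 2*Sq^3*v^2 - 2*c^3*Sn^2*v^2*D*Cc) * hI + (2*Sq*v^2-2*c*v^2*D*Cc) * hS2 + (-2*Sq*c^2*v^2+2*c^3*v^2*D*Cc) * hsc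
  · simp [hAA]
  · simp only [hsS, hAA, hX0', hcr]
    simp
    field_simp
    ring

lemma Zv_Xs {t : ℝ} (c θ v ψ : ℝ) (ht : 0 < t) : Zv c θ t v ψ = Xs c θ v ψ (√t) := by
  unfold Zv Xs Wv
  rw [← Complex.ofReal_pow, Real.sq_sqrt ht.le]

lemma sqrt_tendsto : Tendsto (fun t : ℝ => √t) (𝓝[>] 0) (𝓝[>] 0) := by
  refine tendsto_nhdsWithin_iff.2 ⟨?_, ?_⟩
  · have := Real.continuous_sqrt.tendsto 0
    rw [Real.sqrt_zero] at this
    exact this.mono_left nhdsWithin_le_nhds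
  · filter_upwards [self_mem_nhdsWithin] with t ht
    exact Real.sqrt_pos.2 ht

lemma phase_t {c θ η : ℝ} (hc0 : 0 < c) (hc1 : c < 1) 
    (hcrit : θ - η = Dl c θ * (c * Real.sin θ) / Ssq c θ) (v ψ : ℝ) :
    Tendsto (fun t : ℝ => Complex.exp (((θ:ℂ) - η + Complex.I * (√t*v))^2/(4*t)) * Complex.exp (-(AA (Zv c θ t v ψ))^2/(4*t)) * (Real.exp ((Dl c θ^2 - (θ-η)^2)/(4*t)) : ℝ))
      (𝓝[>] 0) (𝓝 (Complex.exp (-(Ff c θ/8 : ℝ) * v^2) * Complex.exp ((Dl c θ / (2*Ssq c θ) : ℝ) * Complex.exp (ψ * Complex.I)))) := by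
  have h := ((phase_s hc0 hc1 hcrit v ψ).comp sqrt_tendsto).mul_const (-(1/4) : ℂ)
  have h2 := (Complex.continuous_exp.tendsto _).comp h
  rw [← Complex.exp_add]
  refine (h2.congr' ?_).trans (le_of_eq ?_)
  · filter_upwards [self_mem_nhdsWithin] with t ht
    have ht' : (0:ℝ) < t := ht
    have htc : (t:ℂ) ≠ 0 := by exact_mod_cast ht'.ne'
    rw [Complex.ofReal_exp, ← Complex.exp_add, ← Complex.exp_add]
    simp only [Function.comp_apply]
    rw [Zv_Xs _ _ _ _ ht', ← Complex.ofReal_pow (√t), Real.sq_sqrt ht'.le]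
    congr 1
    push_cast
    field_simp
    ring
  · congr 2
    have hSne : (Ssq c θ : ℂ) ≠ 0 := by exact_mod_cast (Ssq_pos (θ := θ) hc0 hc1).ne'
    push_cast
    field_simp
    ring

lemma HH_lim {c θ η ε t1 : ℝ} (d : ℕ) (hc0 : 0 < c) (hc1 : c < 1) (hε : 0 < ε) (ht1 : 0 < t1)
    (hcrit : θ - η = Dl c θ * (c * Real.sin θ) / Ssq c θ) (p : ℝ × ℝ)
    (hA : ∀ t, 0 < t → t ≤ t1 → ε ≤ (AA (Zv c θ t p.1 p.2)).re ∧ (AA (Zv c θ t p.1 p.2)).re ≤ π - ε) :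
    Tendsto (fun t : ℝ => (√t * Real.exp ((Dl c θ^2 - (θ-η)^2)/(4*t)) : ℝ) * HH c θ η t d p) (𝓝[>] 0)
      (𝓝 ((√π * Real.sin θ : ℝ) * (Complex.exp (-(Ff c θ/8 : ℝ) * p.1^2) * (Complex.exp ((Dl c θ / (2*Ssq c θ) : ℝ) * Complex.exp (p.2 * Complex.I)) * Complex.exp (-(d * (p.2 * Complex.I))))))) := by
  have hTh := Th_tendsto hε (fun t => AA (Zv c θ t p.1 p.2)) (by
    filter_upwards [Ioo_mem_nhdsGT ht1] with t ht
    exact hA t ht.1 ht.2.le)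
  have hs : Tendsto (fun t : ℝ => Complex.sin (Wv θ t p.1)) (𝓝[>] 0) (𝓝 (Complex.sin θ)) := by
    have : Continuous (fun t : ℝ => Complex.sin (Wv θ t p.1)) := by unfold Wv; fun_prop
    have h := this.tendsto 0
    simp only [Wv, Real.sqrt_zero, Complex.ofReal_zero, zero_mul, mul_zero, add_zero] at h
    exact h.mono_left nhdsWithin_le_nhds
  have h := ((((phase_t hc0 hc1 hcrit p.1 p.2).mul hs).mul hTh).mul_const (Complex.exp (-(d * (p.2 * Complex.I))))).mul_const ((√π : ℝ) : ℂ)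
  refine (h.congr' ?_).trans (le_of_eq ?_)
  · filter_upwards [self_mem_nhdsWithin] with t ht
    have ht' : (0:ℝ) < t := ht
    unfold HH Gg
    have e : (√π : ℂ) = √t * (√(π/t) : ℝ) := by
      rw [← Complex.ofReal_mul, ← Real.sqrt_mul ht'.le, mul_div_cancel₀ _ ht'.ne']
    rw [e]
    push_cast
    ring
  · congr 1
    push_cast
    ring

lemma Qq_pos {c θ : ℝ} (hc0 : 0 < c) (hc1 : c < 1) : 0 < Qq c θ := by
  obtain ⟨hu1, hu2⟩ := u_bd (θ := θ) hc0 hc1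
  have hS := Ssq_pos (θ := θ) hc0 hc1
  unfold Qq
  rw [sub_pos, div_lt_one hS]
  unfold Ssq at hS ⊢
  unfold Dl
  set u := c * Real.cos θ
  rw [← Real.sin_arccos] at hS ⊢
  have hcos : Real.cos (Real.arccos u) = u := Real.cos_arccos hu1.le hu2.le
  have hp : 0 < Real.arccos u := Real.arccos_pos.2 hu2
  rcases le_or_gt u 0 with h | h
  · nlinarith
  · have h2 : Real.arccos u < π/2 := Real.arccos_lt_pi_div_two.2 h
    have := Real.lt_tan hp h2
    rw [Real.tan_eq_sin_div_cos, hcos, lt_div_iff₀ h] at this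
    linarith

lemma Ff_pos {c θ : ℝ} (hc0 : 0 < c) (hc1 : c < 1) : 0 < Ff c θ := by
  unfold Ff
  have := Qq_pos (θ := θ) hc0 hc1
  have := Ssq_pos (θ := θ) hc0 hc1
  have : 0 < 1 - c^2 := by nlinarith
  positivity

noncomputable def LL (c θ : ℝ) (d : ℕ) : ℝ := √π * Real.sin θ * (√(8*π/Ff c θ) * (2*π*(Dl c θ / (2*Ssq c θ))^d / d.factorial))

lemma lim_int {c θ : ℝ} (d : ℕ) : 
    ∫ p : ℝ × ℝ, ((√π * Real.sin θ : ℝ) * (Complex.exp (-(Ff c θ/8 : ℝ) * p.1^2) * (Complex.exp ((Dl c θ / (2*Ssq c θ) : ℝ) * Complex.exp (p.2 * Complex.I)) * Complex.exp (-(d * (p.2 * Complex.I)))))) ∂mm = (LL c θ d : ℂ) := by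
  rw [integral_const_mul]
  unfold mm
  rw [integral_prod_mul (f := fun v : ℝ => Complex.exp (-(Ff c θ/8 : ℝ) * (v:ℂ)^2)) (g := fun ψ : ℝ => (Complex.exp ((Dl c θ / (2*Ssq c θ) : ℝ) * Complex.exp (ψ * Complex.I)) * Complex.exp (-(d * (ψ * Complex.I))))),
    ← intervalIntegral.integral_of_le (by positivity), circ_exp]
  have e : ∫ v : ℝ, Complex.exp (-(Ff c θ/8 : ℝ) * (v:ℂ)^2) = (√(8*π/Ff c θ) : ℝ) := by
    have h := integral_gaussian (Ff c θ/8)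
    rw [show 8*π/Ff c θ = π/(Ff c θ/8) by rw [div_div_eq_mul_div]; ring, ← h, ← integral_complex_ofReal]
    congr 1; funext v
    push_cast; rfl
  rw [e, LL]
  push_cast
  ring

lemma main_lim (n : ℕ) (hn : 1 ≤ n) (J : ℕ → ℕ → ℕ → ℝ → ℝ) (hJ : IsJacobi J) (r η θ : ℝ)
    (hr : r ∈ Set.Ioo 0 (π/2)) (hη : η ∈ Set.Ioo 0 π) (hθ : θ ∈ Set.Ioo 0 π)
    (hcrit : θ - η = Dl (Real.cos r) θ * (Real.cos r * Real.sin θ) / Ssq (Real.cos r) θ) :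
    Tendsto (fun t : ℝ => √t * Real.exp ((Dl (Real.cos r) θ^2 - (θ-η)^2)/(4*t)) * (pKernel n J t r η / Kc n η t)) (𝓝[>] 0) (𝓝 (LL (Real.cos r) θ (2*n+1))) := by
  have hc0 : 0 < Real.cos r := Real.cos_pos_of_mem_Ioo ⟨by linarith [hr.1, Real.pi_pos], hr.2⟩
  have hc1 : Real.cos r < 1 := by
    have := Real.cos_lt_cos_of_nonneg_of_le_pi_div_two (le_refl 0) hr.2.le hr.1
    simpa using this
  set c := Real.cos r with hc
  obtain ⟨ε, hε, t1, ht1, ht1', C, H⟩ := KB η hc0 hc1 hθ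
  obtain ⟨Q, hQ⟩ := Th_bound hε
  have hev : ∀ᶠ t in 𝓝[>] (0:ℝ), 0 < t ∧ t ≤ t1 := by
    filter_upwards [Ioo_mem_nhdsGT ht1] with t ht
    exact ⟨ht.1, ht.2.le⟩
  have hD : Tendsto (fun t : ℝ => ∫ p, ((√t * Real.exp ((Dl c θ^2 - (θ-η)^2)/(4*t)) : ℝ) * HH c θ η t (2*n+1) p) ∂mm) (𝓝[>] 0) (𝓝 (LL c θ (2*n+1) : ℂ)) := by
    rw [← lim_int]
    refine tendsto_integral_filter_of_dominated_convergence (fun p => √π * (C * Real.exp (-|p.1|)) * Q) ?_ ?_ ?_ ?_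
    · filter_upwards [hev] with t ht
      exact (HH_meas (2*n+1) ht.1 (fun v ψ => ⟨(H t ht.1 ht.2 v ψ).1, (H t ht.1 ht.2 v ψ).2.2.2⟩)).const_mul _
    · filter_upwards [hev] with t ht
      refine Eventually.of_forall (fun p => ?_)
      obtain ⟨h1, h2, h3, h4⟩ := H t ht.1 ht.2 p.1 p.2
      have hth := hQ t ht.1 (ht.2.trans ht1') _ h2 h3
      unfold HH
      set A := AA (Zv c θ t p.1 p.2)
      simp only [norm_mul, norm_e, mul_one, Complex.norm_real]
      have n1 : ‖Complex.exp (-A^2/(4*t))‖ = Real.exp (-(A^2).re/(4*t)) := by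
        rw [Complex.norm_exp]
        congr 1
        rw [show (4*(t:ℂ)) = ((4*t:ℝ):ℂ) by push_cast; rfl, Complex.div_ofReal_re, Complex.neg_re]
      rw [n1, Real.norm_of_nonneg (Real.sqrt_nonneg t), Real.norm_of_nonneg (Real.exp_pos _).le, Real.norm_of_nonneg (Real.sqrt_nonneg _)]
      have e1 : √π = √t * √(π/t) := by
        rw [← Real.sqrt_mul ht.1.le, mul_div_cancel₀ _ ht.1.ne']
      have e2 : Real.exp ((Dl c θ^2 - (θ-η)^2)/(4*t)) * Real.exp (-(Dl c θ^2 - (θ-η)^2)/(4*t)) = 1 := by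
        rw [← Real.exp_add, ← Real.exp_zero]; congr 1; ring
      rw [e1]
      set P := Real.exp ((Dl c θ^2 - (θ-η)^2)/(4*t)) 
      have h4' : ‖Gg θ η t p.1‖ * Real.exp (-(A^2).re/(4*t)) ≤ C * Real.exp (-|p.1|) * Real.exp (-(Dl c θ^2 - (θ-η)^2)/(4*t)) := h4
      have h0 : 0 ≤ C * Real.exp (-|p.1|) := by
        have : 0 ≤ C * Real.exp (-|p.1|) * Real.exp (-(Dl c θ^2 - (θ-η)^2)/(4*t)) := le_trans (by positivity) h4'
        exact nonneg_of_mul_nonneg_left this (Real.exp_pos _)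
      calc _ = (√t * √(π/t) * P * (‖Gg θ η t p.1‖ * Real.exp (-(A^2).re/(4*t)))) * ‖Th t A‖ := by ring
        _ ≤ (√t * √(π/t) * P * (C * Real.exp (-|p.1|) * Real.exp (-(Dl c θ^2 - (θ-η)^2)/(4*t)))) * Q := by
          have : 0 ≤ C * Real.exp (-|p.1|) * Real.exp (-(Dl c θ^2 - (θ-η)^2)/(4*t)) := le_trans (by positivity) h4'
          gcongr
        _ = _ := by linear_combination (√t * √(π/t) * (C * Real.exp (-|p.1|)) * Q) * e2
    · exact ((int_exp_abs_mm.const_mul C).const_mul _).mul_const _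
    · exact Eventually.of_forall (fun p => HH_lim (2*n+1) hc0 hc1 hε ht1 hcrit p (fun t h1 h2 => ⟨(H t h1 h2 p.1 p.2).2.1, (H t h1 h2 p.1 p.2).2.2.1⟩))
  have hre := (Complex.continuous_re.tendsto _).comp hD
  rw [Complex.ofReal_re] at hre
  refine hre.congr' ?_
  filter_upwards [hev] with t ht
  have hsη := Real.sin_pos_of_pos_of_lt_pi hη.1 hη.2
  have hK : Kc n η t ≠ 0 := by
    have := ht.1
    unfold Kc
    have := Nat.factorial_pos (2*n-1)
    have := Nat.factorial_pos (2*n+1)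
    positivity
  have hrep := pK_repr (θ := θ) n hn J hJ r η hr hη ht.1 (fun v ψ => ⟨(H t ht.1 ht.2 v ψ).1, (H t ht.1 ht.2 v ψ).2.2.2⟩)
  have hKc : (Kc n η t : ℂ) ≠ 0 := by exact_mod_cast hK
  have e : ∫ p, HH c θ η t (2*n+1) p ∂mm = ((pKernel n J t r η / Kc n η t : ℝ) : ℂ) := by
    push_cast
    rw [hrep, mul_div_cancel_left₀ _ hKc]
  simp only [Function.comp_apply]
  rw [integral_const_mul, e, ← Complex.ofReal_mul, Complex.ofReal_re]

/-- small-time asymptotics of the subelliptic heat kernel outside of the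
cut-locus, via the steepest descent method. -/
theorem stmt_12 (n : ℕ) (hn : 1 ≤ n) (J : ℕ → ℕ → ℕ → ℝ → ℝ) (hJ : IsJacobi J)
    (r η φ : ℝ) (hr : r ∈ Set.Ioo 0 (π / 2)) (hη : η ∈ Set.Ioo 0 π)
    (hφ : φ ∈ Set.Ioo (-π) 0)
    (hcrit : φ + η = Real.cos r * Real.sin φ * Real.arccos (Real.cos φ * Real.cos r) /
      Real.sqrt (1 - Real.cos r ^ 2 * Real.cos φ ^ 2))
    (u : ℝ) (hu : u = Real.cos r * Real.cos φ) :
    Filter.Tendsto (fun t : ℝ =>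
      pKernel n J t r η * (4 * π * t) ^ (2 * (n : ℝ) + 3 / 2) *
        (Real.sin η * Real.sin r / (-Real.sin φ)) * (1 - u ^ 2) ^ n *
        Real.sqrt (1 - u * Real.arccos u / Real.sqrt (1 - u ^ 2)) *
        (Real.arccos u ^ (2 * n + 1))⁻¹ *
        Real.exp ((φ + η) ^ 2 * Real.tan r ^ 2 / (4 * t * Real.sin φ ^ 2)))
      (𝓝[>] 0) (𝓝 1) := by
  obtain ⟨θ, rfl⟩ : ∃ θ, φ = -θ := ⟨-φ, by ring⟩
  rw [Real.cos_neg] at hcrit hu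
  simp only [Real.sin_neg, neg_neg, neg_sq] at hcrit ⊢
  have hθ : θ ∈ Set.Ioo 0 π := ⟨by linarith [hφ.2], by linarith [hφ.1]⟩
  have hsθ := Real.sin_pos_of_pos_of_lt_pi hθ.1 hθ.2
  have hsη := Real.sin_pos_of_pos_of_lt_pi hη.1 hη.2
  have hsr := Real.sin_pos_of_pos_of_lt_pi hr.1 (by linarith [hr.2, Real.pi_pos])
  have hc0 : 0 < Real.cos r := Real.cos_pos_of_mem_Ioo ⟨by linarith [hr.1, Real.pi_pos], hr.2⟩
  have hc1 : Real.cos r < 1 := by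
    have := Real.cos_lt_cos_of_nonneg_of_le_pi_div_two (le_refl 0) hr.2.le hr.1
    simpa using this
  have hcrit' : θ - η = Dl (Real.cos r) θ * (Real.cos r * Real.sin θ) / Ssq (Real.cos r) θ := by
    unfold Dl Ssq
    rw [mul_comm (Real.cos θ)] at hcrit
    rw [mul_pow]
    have : θ - η = -(-θ + η) := by ring
    rw [this, hcrit]; ring
  have main := main_lim n hn J hJ r η θ hr hη hθ hcrit'
  have hS := Ssq_pos (θ := θ) hc0 hc1
  have hS2 := Ssq_sq (θ := θ) hc0 hc1
  have hQ := Qq_pos (θ := θ) hc0 hc1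
  have hF : Ff (Real.cos r) θ = 2*(1-(Real.cos r)^2)/(Ssq (Real.cos r) θ)^2 * Qq (Real.cos r) θ := rfl
  have hD : 0 < Dl (Real.cos r) θ := Real.arccos_pos.2 (u_bd hc0 hc1).2
  have hrc := Real.sin_sq_add_cos_sq r
  have hthc := Real.sin_sq_add_cos_sq θ
  have eQ : 1 - u * Real.arccos u / Real.sqrt (1 - u ^ 2) = Qq (Real.cos r) θ := by rw [hu]; rfl
  have eD : Real.arccos u = Dl (Real.cos r) θ := by rw [hu]; rfl
  have eU : 1 - u^2 = Ssq (Real.cos r) θ^2 := by rw [hS2, hu]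
  have hfac1 : ((2*n-1).factorial : ℝ) ≠ 0 := by exact_mod_cast Nat.factorial_ne_zero _
  have hfac2 : ((2*n+1).factorial : ℝ) ≠ 0 := by exact_mod_cast Nat.factorial_ne_zero _
  set c := Real.cos r with hc
  set D := Dl c θ
  set S := Ssq c θ
  set Q := Qq c θ
  have hpi := Real.pi_pos
  have hpi2 : √π^2 = π := Real.sq_sqrt hpi.le
  have hpis : 0 < √π := Real.sqrt_pos.2 hpi
  have h4pi : √(4*π) = 2*√π := by
    rw [Real.sqrt_mul (by norm_num), show (4:ℝ) = 2^2 by norm_num, Real.sqrt_sq (by norm_num)]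
  have hQs : 0 < √Q := Real.sqrt_pos.2 hQ
  have hQs2 : √Q^2 = Q := Real.sq_sqrt hQ.le
  set B : ℝ := ((2*n-1).factorial / (2*π^(2*n+2)) / Real.sin η) * (√(4*π))⁻¹ * (2^(2*n) * (2*n-1).factorial : ℝ)⁻¹ * ((2*n+1).factorial / (2*π)) * (1/2) * ((4*π)^(2*n) * (4*π) * √(4*π)) * (Real.sin η * Real.sin r / Real.sin θ) * (S^2)^n * √Q * (D^(2*n+1))⁻¹ with hB
  have hexp : Tendsto (fun t : ℝ => Real.exp (4*n*(n+1)*t)) (𝓝[>] 0) (𝓝 1) := by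
    have : Continuous (fun t : ℝ => Real.exp (4*n*(n+1)*t)) := by fun_prop
    have h := this.tendsto 0
    rw [mul_zero, Real.exp_zero] at h
    exact h.mono_left nhdsWithin_le_nhds
  have fin := (main.mul hexp).mul_const B
  have hval : LL c θ (2*n+1) * 1 * B = 1 := by
    have e8 : √(8*π/Ff c θ) = 2*√π*S/(Real.sin r*√Q) := by
      rw [Real.sqrt_eq_iff_mul_self_eq (by rw [hF, show 1 - c^2 = Real.sin r^2 by linarith]; positivity) (by positivity)]
      rw [hF, show 1 - c^2 = Real.sin r^2 by linarith]
      field_simp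
      rw [hpi2, hQs2]; ring
    unfold LL
    rw [e8, hB, h4pi, ← pow_mul]
    change √π * Real.sin θ * (2*√π*S/(Real.sin r*√Q) * (2*π*(D / (2*S))^(2*n+1) / (2*n+1).factorial)) * 1 * _ = 1
    rw [show (4*π)^(2*n) = 2^(2*n) * 2^(2*n) * π^(2*n) by rw [← mul_pow, ← mul_pow]; norm_num]
    rw [div_pow, mul_pow, pow_succ 2 (2*n), pow_succ S (2*n), pow_add π (2*n) 2]
    field_simp
    rw [hpi2]
    ring_nf
  rw [hval] at fin
  refine fin.congr' ?_
  filter_upwards [self_mem_nhdsWithin] with t ht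
  have ht' : (0:ℝ) < t := ht
  have hts : 0 < √t := Real.sqrt_pos.2 ht'
  have hts2 : √t^2 = t := Real.sq_sqrt ht'.le
  have ee : (-θ + η) ^ 2 * Real.tan r ^ 2 / (4 * t * Real.sin θ ^ 2) = (D^2 - (θ-η)^2)/(4*t) := by
    rw [show (-θ + η)^2 = (θ-η)^2 by ring, hcrit', Real.tan_eq_sin_div_cos, ← hc]
    have : D^2 - (D * (c * Real.sin θ)/S)^2 = D^2 * Real.sin r^2/S^2 := by
      field_simp
      rw [hS2]
      linear_combination -hrc + c^2*(-hthc)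
    rw [this]
    field_simp
  rw [ee, eQ, eD, eU]
  have ep : (4*π*t)^(2*(n:ℝ)+3/2) = ((4*π)^(2*n) * (4*π) * √(4*π)) * (t^(2*n) * t * √t) := by
    rw [show 2*(n:ℝ)+3/2 = ((2*n+1:ℕ):ℝ) + 1/2 by push_cast; ring, Real.rpow_add (by positivity), Real.rpow_natCast, ← Real.sqrt_eq_rpow, Real.sqrt_mul (by positivity) t, pow_succ, mul_pow]
    ring
  rw [ep, hB]
  unfold Kc
  have hE := Real.exp_pos (4*n*(n+1)*t)
  set E1 := Real.exp (4*n*(n+1)*t)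
  set E2 := Real.exp ((D^2 - (θ-η)^2)/(4*t))
  have hs4 : 0 < √(4*π) := by positivity
  have e9 : (t:ℝ)^(2*n+1) = t^(2*n)*t := pow_succ _ _
  rw [e9]
  field_simp
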